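/- arXiv:2110.11743 — 2 statements merged into one kernel-verified Lean document; each statement's English description precedes it below -/
import Mathlib

section
/- Let G = G(m,t,s) with m = 2q where q > 1 is odd, and gcd(t, m) = 1. Then there exist a homomorphism φ : ℤ₂ × U(m) → Aut(ℤ_{m/2}) and a homomorphism ψ : ℤ₂ → Aut(ℤ_{m/2} ⋊_φ (ℤ₂ × U(m))) such that Aut(G) ≅ (ℤ_{m/2} ⋊_φ (ℤ₂ × U(m))) ⋊_ψ ℤ₂. -/
/-- The defining relations of the group `G(m,t,s)`:
`a^m = 1`, `b⁴ = 1`, `ab = b³a^{2t+1}`, `a²b = ba^{2s}`, where `a` is the generator `0`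
and `b` is the generator `1`. -/
abbrev zsRels (m : ℕ) (t s : ℤ) : Set (FreeGroup (Fin 2)) :=
  {FreeGroup.of 0 ^ m,
   FreeGroup.of 1 ^ 4,
   FreeGroup.of 0 * FreeGroup.of 1 * (FreeGroup.of 1 ^ 3 * FreeGroup.of 0 ^ (2 * t + 1))⁻¹,
   FreeGroup.of 0 ^ 2 * FreeGroup.of 1 * (FreeGroup.of 1 * FreeGroup.of 0 ^ (2 * s))⁻¹}

/-- The group `G(m,t,s)`. -/
abbrev ZSGroup (m : ℕ) (t s : ℤ) := PresentedGroup (zsRels m t s)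

/-- The cyclic group `ℤ_n` of order `n`, written multiplicatively. -/
abbrev Zc (n : ℕ) := Multiplicative (ZMod n)

/-!
For `m = 2q` the hypotheses force `t ≡ s ≡ -1` modulo `q`, and the relations of `G(m,t,s)` become
`aba = b⁻¹` and `ba²b⁻¹ = a⁻²`. Since `q` is odd, `a²` generates a normal subgroup `ℤ_q`, and `b`
and the involution `a ^ q` generate a dihedral complement `D₄` of order 8 in which exactly the
elements outside `⟨b², a ^ q⟩` invert `ℤ_q`. So `G ≅ ℤ_q ⋊ D₄` with `D₄` acting through a character
`χ : D₄ → {±1}`.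

The orders being coprime, an automorphism of `ℤ_q ⋊ D₄` preserves `ℤ_q` and induces an
automorphism of `D₄`, which must preserve `χ`. It is therefore of the form
`(x, d) ↦ (σ x * c d, α d)` where `c` is a cocycle. Coprimality kills `c` on `ker χ`, so `c` takes
one value `k` outside `ker χ`. The triples `(k, α, σ)` form the group `ℤ_q ⋊ (A × Aut ℤ_q)` with
`A ≅ ℤ₂ × ℤ₂` the stabilizer of `χ` in `Aut D₄`, and `Aut ℤ_q ≅ U(q) ≅ U(2q)`. As `A` acts
trivially on `ℤ_q`, the homomorphism `ψ` can be taken trivial.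
-/

open SemidirectProduct

section
variable (N : Type*) [CommGroup N]

/-- The action of the units `±1` of `ℤ` on an abelian group by `x ↦ x ^ ε`. -/
def zpowUnitsHom : ℤˣ →* MulAut N where
  toFun ε :=
    { zpowGroupHom (ε : ℤ) with
      invFun x := x ^ (ε : ℤ)
      left_inv x := by simp [← zpow_mul]
      right_inv x := by simp [← zpow_mul] }
  map_one' := by ext; simp
  map_mul' ε δ := by ext x; exact zpow_mul' x ε δ

variable {N}

theorem inv_eq_self_of_zpow_units_eq {ε δ : ℤˣ} (h : ε ≠ δ) {x : N}
    (hx : x ^ (ε : ℤ) = x ^ (δ : ℤ)) : x⁻¹ = x := by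
  rcases Int.units_eq_one_or ε with rfl | rfl <;> rcases Int.units_eq_one_or δ with rfl | rfl
  · exact absurd rfl h
  · simpa using hx.symm
  · simpa using hx
  · exact absurd rfl h

end

/-! ### Automorphisms of semidirect products with a sign action -/

section
variable {D : Type*} [Group D] (χ : D →* ℤˣ)

/-- The action of `D` on an abelian group through a sign character `χ`: `d` acts by
`x ↦ x ^ χ d`. -/
def signAction (N : Type*) [CommGroup N] : D →* MulAut N := (zpowUnitsHom N).comp χ

/-- The stabilizer of the character `χ` in the automorphism group of `D`. -/
def signStabilizer : Subgroup (MulAut D) where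
  carrier := {α | ∀ d, χ (α d) = χ d}
  one_mem' _ := rfl
  mul_mem' hα hβ d := (hα _).trans (hβ d)
  inv_mem' {α} hα d := by simpa using (hα (α⁻¹ d)).symm

theorem mem_signStabilizer {χ : D →* ℤˣ} {α : MulAut D} :
    α ∈ signStabilizer χ ↔ ∀ d, χ (α d) = χ d := Iff.rfl

variable {N : Type*} [CommGroup N]

@[simp]
theorem signAction_apply (d : D) (x : N) : signAction χ N d x = x ^ (χ d : ℤ) := rfl

/-- The 1-cocycle `D → N` for `signAction χ N` that vanishes on the kernel of `χ` and is constantly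
`k` outside it. -/
def signCocycle (k : N) (d : D) : N := if χ d = 1 then 1 else k

theorem signCocycle_mul (k : N) (d e : D) :
    signCocycle χ k (d * e) = signCocycle χ k d * signCocycle χ k e ^ (χ d : ℤ) := by
  rcases Int.units_eq_one_or (χ d) with hd | hd <;>
    rcases Int.units_eq_one_or (χ e) with he | he <;> simp [signCocycle, hd, he]

@[simp]
theorem signCocycle_one_right (k : N) : signCocycle χ k 1 = 1 := by simp [signCocycle]

@[simp]
theorem signCocycle_one_left (d : D) : signCocycle χ (1 : N) d = 1 := by simp [signCocycle]

theorem signCocycle_mul_left (k l : N) (d : D) :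
    signCocycle χ (k * l) d = signCocycle χ k d * signCocycle χ l d := by
  simp only [signCocycle]; split <;> simp

theorem map_signCocycle (σ : MulAut N) (k : N) (d : D) :
    σ (signCocycle χ k d) = signCocycle χ (σ k) d := by
  simp [signCocycle, apply_ite σ]

@[simp]
theorem signCocycle_apply_stabilizer (α : signStabilizer χ) (k : N) (d : D) :
    signCocycle χ k (α.1 d) = signCocycle χ k d := by
  simp only [signCocycle, mem_signStabilizer.mp α.2]

@[simp]
theorem signCocycle_symm_apply_stabilizer (α : signStabilizer χ) (k : N) (d : D) :
    signCocycle χ k (α.1.symm d) = signCocycle χ k d :=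
  signCocycle_apply_stabilizer χ α⁻¹ k d

variable (N) in
/-- The automorphisms `(x, d) ↦ (σ x * signCocycle χ k d, α d)` of `N ⋊ D`, as a homomorphism in
the triple `(k, α, σ)`. -/
def affineAut : N ⋊[MonoidHom.snd (signStabilizer χ) (MulAut N)] (signStabilizer χ × MulAut N) →*
    MulAut (N ⋊[signAction χ N] D) where
  toFun g :=
    { toFun z := ⟨g.right.2 z.left * signCocycle χ g.left z.right, g.right.1.1 z.right⟩
      invFun z :=
        ⟨g.right.2⁻¹ (z.left * (signCocycle χ g.left z.right)⁻¹), g.right.1.1⁻¹ z.right⟩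
      left_inv z := by ext <;> simp
      right_inv z := by ext <;> simp
      map_mul' z w := by
        ext
        · simp [signCocycle_mul, mem_signStabilizer.mp g.right.1.2, mul_zpow, mul_mul_mul_comm]
        · simp }
  map_one' := by ext <;> simp
  map_mul' g h := by
    ext z
    · simp [signCocycle_mul_left, map_signCocycle, mul_comm, mul_left_comm]
    · simp

theorem affineAut_apply (g) (z : N ⋊[signAction χ N] D) :
    affineAut χ N g z =
      ⟨g.right.2 z.left * signCocycle χ g.left z.right, g.right.1.1 z.right⟩ := rfl

variable {χ}

theorem affineAut_injective (hχ : χ ≠ 1) : Function.Injective (affineAut χ N) := by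
  obtain ⟨d, hd⟩ := DFunLike.ne_iff.mp hχ
  intro g h hgh
  have key (z : N ⋊[signAction χ N] D) := SemidirectProduct.ext_iff.mp (DFunLike.congr_fun hgh z)
  simp only [affineAut_apply] at key
  have hleft : g.left = h.left := by simpa [signCocycle, show χ d ≠ 1 from hd] using (key (inr d)).1
  refine SemidirectProduct.ext hleft (Prod.ext (Subtype.ext ?_) ?_)
  · ext e
    exact (key (inr e)).2
  · ext x
    simpa using (key (inl x)).1

theorem monoidHom_eq_one_of_coprime_exponent {G H : Type*} [Group G] [Group H]
    (hcop : (Monoid.exponent G).Coprime (Monoid.exponent H)) (f : G →* H) : f = 1 := by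
  ext x
  rw [MonoidHom.one_apply, ← orderOf_eq_one_iff]
  exact Nat.eq_one_of_dvd_coprimes hcop
    ((orderOf_map_dvd f x).trans (Monoid.order_dvd_exponent x)) (Monoid.order_dvd_exponent (f x))

theorem two_dvd_exponent_of_ne_one (hχ : χ ≠ 1) : 2 ∣ Monoid.exponent D := by
  obtain ⟨d, hd⟩ := DFunLike.ne_iff.mp hχ
  have hd' : χ d = -1 := (Int.units_eq_one_or (χ d)).resolve_left hd
  have : (-1 : ℤˣ) ^ Monoid.exponent D = 1 := by
    rw [← hd', ← map_pow, Monoid.pow_exponent_eq_one, map_one]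
  rw [← even_iff_two_dvd]
  by_contra hodd
  simp [(Nat.not_even_iff_odd.mp hodd).neg_one_pow] at this

theorem inv_ne_self_of_coprime_exponent
    (hcop : (Monoid.exponent N).Coprime (Monoid.exponent D)) (hχ : χ ≠ 1) {x : N} (hx : x ≠ 1) :
    x⁻¹ ≠ x := by
  intro h
  have : orderOf x = 2 := orderOf_eq_prime (by rw [sq, ← inv_eq_iff_mul_eq_one, h]) hx
  have := Nat.eq_one_of_dvd_coprimes hcop (this ▸ Monoid.order_dvd_exponent x)
    (two_dvd_exponent_of_ne_one hχ)
  omega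

end

section
variable {N D : Type*} [Group N] [Group D] {φ : D →* MulAut N}

theorem semidirect_right_map_inl (hcop : (Monoid.exponent N).Coprime (Monoid.exponent D))
    (f : N ⋊[φ] D →* N ⋊[φ] D) (x : N) : (f (inl x)).right = 1 :=
  DFunLike.congr_fun
    (monoidHom_eq_one_of_coprime_exponent hcop ((rightHom.comp f).comp inl)) x

theorem semidirect_right_map (hcop : (Monoid.exponent N).Coprime (Monoid.exponent D))
    (f : N ⋊[φ] D →* N ⋊[φ] D) (z : N ⋊[φ] D) : (f z).right = (f (inr z.right)).right := by
  conv_lhs => rw [← inl_left_mul_inr_right z, map_mul, mul_right,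
    semidirect_right_map_inl hcop, one_mul]

theorem exists_mulAut_map_inl (hcop : (Monoid.exponent N).Coprime (Monoid.exponent D))
    (f : MulAut (N ⋊[φ] D)) : ∃ σ : MulAut N, ∀ x, f (inl x) = inl (σ x) := by
  have map_inl (g : MulAut (N ⋊[φ] D)) (x : N) : g (inl x) = inl (g (inl x)).left := by
    ext
    · rfl
    · exact semidirect_right_map_inl hcop g.toMonoidHom x
  refine ⟨{ toFun x := (f (inl x)).left
            invFun x := (f.symm (inl x)).left
            left_inv x := ?_
            right_inv x := ?_
            map_mul' x y := ?_ }, map_inl f⟩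
  · dsimp only
    rw [← map_inl f, f.symm_apply_apply, left_inl]
  · dsimp only
    rw [← map_inl f.symm, f.apply_symm_apply, left_inl]
  · apply inl_injective (φ := φ)
    rw [← map_inl, map_mul, map_mul, map_mul, ← map_inl, ← map_inl]

theorem exists_mulAut_right_map (hcop : (Monoid.exponent N).Coprime (Monoid.exponent D))
    (f : MulAut (N ⋊[φ] D)) : ∃ α : MulAut D, ∀ z, (f z).right = α z.right := by
  have right_map' (g : MulAut (N ⋊[φ] D)) := semidirect_right_map hcop g.toMonoidHom
  simp only [MulEquiv.toMonoidHom_eq_coe, MonoidHom.coe_coe] at right_map'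
  refine ⟨{ toFun d := (f (inr d)).right
            invFun d := (f.symm (inr d)).right
            left_inv d := ?_
            right_inv d := ?_
            map_mul' d e := ?_ }, right_map' f⟩
  · dsimp only
    rw [← right_map' f.symm, f.symm_apply_apply, right_inr]
  · dsimp only
    rw [← right_map' f, f.apply_symm_apply, right_inr]
  · rw [map_mul, map_mul, mul_right]

end

section
variable {N D : Type*} [CommGroup N] [Group D] {χ : D →* ℤˣ}

theorem mem_signStabilizer_of_right_map
    (hN : ∃ x : N, x⁻¹ ≠ x) {f : MulAut (N ⋊[signAction χ N] D)} {σ : MulAut N} {α : MulAut D}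
    (hσ : ∀ x, f (inl x) = inl (σ x)) (hα : ∀ z, (f z).right = α z.right) :
    α ∈ signStabilizer χ := by
  intro d
  by_contra hne
  obtain ⟨y, hy⟩ := hN
  obtain ⟨x, rfl⟩ := σ.surjective y
  refine hy (inv_eq_self_of_zpow_units_eq hne ?_)
  have hconj : f (inr d) * inl (σ x) = inl (σ x ^ (χ d : ℤ)) * f (inr d) := by
    rw [← map_zpow σ, ← hσ, ← hσ, ← map_mul, ← map_mul, ← signAction_apply, inl_aut, map_inv,
      inv_mul_cancel_right]
  have := congrArg left hconj
  simpa [hα, mul_comm, -map_zpow] using this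

theorem eq_signCocycle_of_map_mul (hcop : (Monoid.exponent N).Coprime (Monoid.exponent D))
    {c : D → N} (hc : ∀ d e, c (d * e) = c d * c e ^ (χ d : ℤ)) :
    ∃ k, ∀ d, c d = signCocycle χ k d := by
  have hker (d : D) (hd : χ d = 1) : c d = 1 := by
    let cker : χ.ker →* N := MonoidHom.mk' (fun d ↦ c d) fun d e ↦ by
      simp [hc, MonoidHom.mem_ker.mp d.2]
    have hexp : (Monoid.exponent χ.ker).Coprime (Monoid.exponent N) :=
      hcop.symm.of_dvd_left (Monoid.exponent_dvd_of_monoidHom χ.ker.subtype Subtype.val_injective)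
    exact DFunLike.congr_fun (monoidHom_eq_one_of_coprime_exponent hexp cker) ⟨d, hd⟩
  by_cases hχ : ∃ e, χ e ≠ 1
  · obtain ⟨e, he⟩ := hχ
    refine ⟨c e, fun d ↦ ?_⟩
    by_cases hd : χ d = 1
    · simp [signCocycle, hd, hker d hd]
    · have hde : χ (d * e⁻¹) = 1 := by
        rcases Int.units_eq_one_or (χ d) with h | h <;>
          rcases Int.units_eq_one_or (χ e) with h' | h' <;> simp_all
      have := hc (d * e⁻¹) e
      simpa [signCocycle, hd, hde, hker _ hde] using this
  · push Not at hχ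
    exact ⟨1, fun d ↦ by simp [hker d (hχ d)]⟩

theorem affineAut_surjective [Nontrivial N]
    (hcop : (Monoid.exponent N).Coprime (Monoid.exponent D)) (hχ : χ ≠ 1) :
    Function.Surjective (affineAut χ N) := by
  intro f
  obtain ⟨x, hx⟩ := exists_ne (1 : N)
  obtain ⟨σ, hσ⟩ := exists_mulAut_map_inl hcop f
  obtain ⟨α, hα⟩ := exists_mulAut_right_map hcop f
  have hα' : α ∈ signStabilizer χ :=
    mem_signStabilizer_of_right_map ⟨x, inv_ne_self_of_coprime_exponent hcop hχ hx⟩ hσ hα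
  obtain ⟨k, hk⟩ : ∃ k, ∀ d, (f (inr d)).left = signCocycle χ k d :=
    eq_signCocycle_of_map_mul hcop fun d e ↦ by
      simp [hα, mem_signStabilizer.mp hα']
  refine ⟨⟨k, ⟨α, hα'⟩, σ⟩, MulEquiv.ext fun z ↦ ?_⟩
  ext
  · conv_rhs => rw [← inl_left_mul_inr_right z, map_mul, hσ]
    simp only [affineAut_apply, mul_left, left_inl, right_inl, map_one, MulAut.one_apply, hk]
  · exact (hα z).symm

/-- `Aut (N ⋊ D) ≅ N ⋊ (signStabilizer χ × Aut N)` for `N` and `D` of coprime exponents and a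
nontrivial character `χ`. -/
noncomputable def affineAutEquiv [Nontrivial N]
    (hcop : (Monoid.exponent N).Coprime (Monoid.exponent D)) (hχ : χ ≠ 1) :
    N ⋊[MonoidHom.snd (signStabilizer χ) (MulAut N)] (signStabilizer χ × MulAut N) ≃*
      MulAut (N ⋊[signAction χ N] D) :=
  MulEquiv.ofBijective (affineAut χ N) ⟨affineAut_injective hχ, affineAut_surjective hcop hχ⟩

end

/-! ### The dihedral group of order 8 -/

open DihedralGroup

/-- The character of `D₄` with kernel the Klein four-group `{1, r 2, sr 0, sr 2}`. -/
def dihedralSign : DihedralGroup 4 →* ℤˣ where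
  toFun
    | r i => (-1) ^ i.val
    | sr i => (-1) ^ i.val
  map_one' := rfl
  map_mul' := by decide

theorem dihedralSign_ne_one : dihedralSign ≠ 1 := fun h ↦
  absurd (DFunLike.congr_fun h (r 1)) (by decide)

theorem closure_r_one_sr_zero (n : ℕ) :
    Subgroup.closure {r 1, sr 0} = (⊤ : Subgroup (DihedralGroup n)) := by
  have hr (i : ZMod n) : r i ∈ Subgroup.closure {r (1 : ZMod n), sr 0} := by
    obtain ⟨k, rfl⟩ := ZMod.intCast_surjective i
    rw [← r_one_zpow]
    exact zpow_mem (Subgroup.subset_closure (by simp)) k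
  refine (Subgroup.eq_top_iff' _).mpr ?_
  rintro (i | i)
  · exact hr i
  · rw [← zero_add i, ← sr_mul_r]
    exact mul_mem (Subgroup.subset_closure (by simp)) (hr i)

/-- The automorphisms `r 1 ↦ r (±1)`, `sr 0 ↦ sr 0` or `sr 2` of `D₄`, which form a group
`ℤ₂ × ℤ₂`: the first factor records the image of `sr 0`, the second that of `r 1`. -/
def dihedralAut : Zc 2 × Zc 2 →* MulAut (DihedralGroup 4) where
  toFun p :=
    let u : ZMod 4 := 1 + 2 * p.2.toAdd.val
    let c : ZMod 4 := 2 * p.1.toAdd.val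
    let f
      | r x => r (u * x)
      | sr x => sr (u * x + c)
    { toFun := f
      invFun := f
      left_inv := by revert p; decide
      right_inv := by revert p; decide
      map_mul' := by revert p; decide }
  map_one' := by ext d; revert d; decide
  map_mul' p p' := by ext d; revert p p' d; decide

theorem dihedralAut_mem_signStabilizer (p : Zc 2 × Zc 2) :
    dihedralAut p ∈ signStabilizer dihedralSign := by
  rw [mem_signStabilizer]; revert p; decide

theorem dihedralAut_injective : Function.Injective dihedralAut := by
  have h : ∀ p q, dihedralAut p (r 1) = dihedralAut q (r 1) →
    dihedralAut p (sr 0) = dihedralAut q (sr 0) → p = q := by decide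
  exact fun p q hpq ↦ h p q (DFunLike.congr_fun hpq _) (DFunLike.congr_fun hpq _)

theorem exists_dihedralAut_eq {α : MulAut (DihedralGroup 4)}
    (hα : α ∈ signStabilizer dihedralSign) : ∃ p, dihedralAut p = α := by
  have images : ∀ ρ σ : DihedralGroup 4, ρ ^ 2 ≠ 1 → dihedralSign σ = 1 → σ ≠ 1 → σ ≠ ρ ^ 2 →
      ∃ p, dihedralAut p (r 1) = ρ ∧ dihedralAut p (sr 0) = σ := by decide
  obtain ⟨p, hr, hsr⟩ := images (α (r 1)) (α (sr 0))
    (by rw [← map_pow, map_ne_one_iff α α.injective]; decide)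
    (by rw [mem_signStabilizer.mp hα]; decide)
    (by rw [map_ne_one_iff α α.injective]; decide)
    (by rw [← map_pow, α.injective.ne_iff]; decide)
  exact ⟨p, MulEquiv.toMonoidHom_injective
    (MonoidHom.eq_of_eqOn_dense (closure_r_one_sr_zero 4) (by simp [Set.EqOn, hr, hsr]))⟩

/-- The stabilizer of `dihedralSign` in `Aut D₄` is `ℤ₂ × ℤ₂`. -/
noncomputable def dihedralAutEquiv : Zc 2 × Zc 2 ≃* signStabilizer dihedralSign :=
  MulEquiv.ofBijective (dihedralAut.codRestrict _ dihedralAut_mem_signStabilizer)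
    ⟨(MonoidHom.injective_codRestrict ..).mpr dihedralAut_injective, fun α ↦
      (exists_dihedralAut_eq α.2).imp fun _ ↦ Subtype.ext⟩

/-! ### The group `G(2q,t,s)` -/

/-- The action of `(ℤ/n)ˣ` on `ℤ/n` by multiplication, which exhausts `Aut (ℤ/n)`. -/
def unitsMulEquivMulAut (n : ℕ) : (ZMod n)ˣ ≃* MulAut (Zc n) :=
  ((MulAutMultiplicative (ZMod n)).trans (ZMod.AddAutEquivUnits n).toMultiplicativeLeft).symm

theorem unitsMap_two_mul_bijective {q : ℕ} (hq : Odd q) :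
    Function.Bijective (ZMod.unitsMap (dvd_mul_left q 2)) := by
  have : NeZero q := ⟨hq.pos.ne'⟩
  refine (ZMod.unitsMap_surjective _).bijective_of_nat_card_le ?_
  rw [Nat.card_eq_fintype_card, Nat.card_eq_fintype_card, ZMod.card_units_eq_totient,
    ZMod.card_units_eq_totient, Nat.totient_two_mul_of_odd hq]

/-- `N ⋊ (G × H)` with `H` acting trivially, regrouped as `(N ⋊ G) ⋊ H`. -/
def semidirectFstEquiv {N G H : Type*} [Group N] [Group G] [Group H] (φ : G →* MulAut N) :
    N ⋊[φ.comp (MonoidHom.fst G H)] (G × H) ≃* (N ⋊[φ] G) ⋊[(1 : H →* _)] H where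
  toFun x := ⟨⟨x.left, x.right.1⟩, x.right.2⟩
  invFun x := ⟨x.left.left, (x.left.right, x.right)⟩
  left_inv _ := rfl
  right_inv _ := rfl
  map_mul' _ _ := rfl

/-- The action of `ℤ₂ × U(2q)` on `ℤ_q` in which `ℤ₂` acts trivially and `U(2q)` by
multiplication. -/
def unitsTwoMulAction (q : ℕ) : Zc 2 × (ZMod (2 * q))ˣ →* MulAut (Zc q) :=
  (unitsMulEquivMulAut q).toMonoidHom.comp <|
    (ZMod.unitsMap (dvd_mul_left q 2)).comp (MonoidHom.snd _ _)

section
variable {M : Type*} [Group M] {a b : M}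

theorem zpow_eq_zpow_of_dvd_sub {n : ℕ} (ha : a ^ n = 1) {i j : ℤ} (h : (n : ℤ) ∣ i - j) :
    a ^ i = a ^ j :=
  zpow_eq_zpow_iff_modEq.mpr <| Int.ModEq.symm <|
    (Int.modEq_iff_dvd.mpr h).of_dvd (by exact_mod_cast orderOf_dvd_of_pow_eq_one ha)

theorem lift_zsRels_eq_one_iff {q : ℕ} {t s : ℤ} (ht : (q : ℤ) ∣ t + 1) (hs : (q : ℤ) ∣ s + 1) :
    (∀ x ∈ zsRels (2 * q) t s, FreeGroup.lift ![a, b] x = 1) ↔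
      a ^ (2 * q) = 1 ∧ b ^ 4 = 1 ∧ a * b * a = b⁻¹ ∧ SemiconjBy b (a ^ 2) (a ^ 2)⁻¹ := by
  simp only [zsRels, Set.mem_insert_iff, Set.mem_singleton_iff, forall_eq_or_imp, forall_eq,
    map_mul, map_inv, map_pow, map_zpow, FreeGroup.lift_apply_of, Matrix.cons_val_zero,
    Matrix.cons_val_one, mul_inv_eq_one]
  refine and_congr_right fun ha ↦ and_congr_right fun hb ↦ and_congr ?_ ?_
  · have hat : a ^ (2 * t + 1) = a⁻¹ := by
      rw [← zpow_neg_one]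
      have : ((2 * q : ℕ) : ℤ) ∣ 2 * t + 1 - -1 := by
        rw [show 2 * t + 1 - -1 = 2 * (t + 1) by ring]
        exact mul_dvd_mul_left 2 ht
      exact zpow_eq_zpow_of_dvd_sub ha this
    have hb3 : b ^ 3 = b⁻¹ := by rw [← mul_eq_one_iff_eq_inv, ← pow_succ, hb]
    rw [hat, hb3, eq_mul_inv_iff_mul_eq]
  · have has : a ^ (2 * s) = (a ^ 2)⁻¹ := by
      rw [← zpow_natCast, ← zpow_neg]
      have : ((2 * q : ℕ) : ℤ) ∣ 2 * s - -((2 : ℕ) : ℤ) := by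
        rw [show 2 * s - -((2 : ℕ) : ℤ) = 2 * (s + 1) by push_cast; ring]
        exact mul_dvd_mul_left 2 hs
      exact zpow_eq_zpow_of_dvd_sub ha this
    rw [has, SemiconjBy, eq_mul_inv_iff_mul_eq, eq_inv_mul_iff_mul_eq, mul_assoc]

theorem exists_mul_zpow_eq (haba : a * b * a = b⁻¹) (hab : SemiconjBy b (a ^ 2) (a ^ 2)⁻¹)
    (i : ℤ) : ∃ j : ℤ, b * a ^ i = a ^ (-i) * b ^ j := by
  have heven (k : ℤ) : b * a ^ (2 * k) = a ^ (-(2 * k)) * b := by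
    simpa [zpow_mul, zpow_ofNat] using (hab.zpow_right k).eq
  have hba : b * a = a⁻¹ * b⁻¹ := by rw [eq_inv_mul_iff_mul_eq, ← mul_assoc, haba]
  obtain ⟨k, rfl | rfl⟩ := i.even_or_odd'
  · exact ⟨1, by rw [heven, zpow_one]⟩
  · refine ⟨-1, ?_⟩
    rw [zpow_add_one, ← mul_assoc, heven, mul_assoc, hba]
    group

theorem exists_eq_zpow_mul_zpow (hgen : Subgroup.closure {a, b} = ⊤)
    (hb : ∀ i : ℤ, ∃ j : ℤ, b * a ^ i = a ^ (-i) * b ^ j) (g : M) :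
    ∃ i j : ℤ, g = a ^ i * b ^ j := by
  have hg : g ∈ Subgroup.closure {a, b} := hgen ▸ Subgroup.mem_top g
  induction hg using Subgroup.closure_induction_left with
  | one => exact ⟨0, 0, by simp⟩
  | mul_left x hx y _ ih =>
    obtain ⟨i, j, rfl⟩ := ih
    obtain rfl | hxb := hx
    · exact ⟨1 + i, j, by group⟩
    · obtain ⟨k, hk⟩ := hb i
      exact ⟨-i, k + j, by rw [Set.mem_singleton_iff.mp hxb, ← mul_assoc, hk, zpow_add, mul_assoc]⟩
  | inv_mul_cancel x hx y _ ih =>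
    obtain ⟨i, j, rfl⟩ := ih
    obtain rfl | hxb := hx
    · exact ⟨-1 + i, j, by group⟩
    · obtain ⟨k, hk⟩ := hb (-i)
      have hinv : b⁻¹ * a ^ i = a ^ (-i) * b ^ (-k) := by
        rw [inv_mul_eq_iff_eq_mul, ← mul_assoc, hk]
        group
      exact ⟨-i, -k + j, by
        rw [Set.mem_singleton_iff.mp hxb, ← mul_assoc, hinv, zpow_add, mul_assoc]⟩

theorem finite_and_card_le_of_forall_eq_zpow_mul_zpow (ha : IsOfFinOrder a) (hb : IsOfFinOrder b)
    (h : ∀ g : M, ∃ i j : ℤ, g = a ^ i * b ^ j) :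
    Finite M ∧ Nat.card M ≤ orderOf a * orderOf b := by
  have : Finite (Subgroup.zpowers a) := finite_zpowers.mpr ha
  have : Finite (Subgroup.zpowers b) := finite_zpowers.mpr hb
  have hsurj : Function.Surjective
      fun p : Subgroup.zpowers a × Subgroup.zpowers b ↦ (p.1 * p.2 : M) := fun g ↦ by
    obtain ⟨i, j, rfl⟩ := h g
    exact ⟨(⟨a ^ i, i, rfl⟩, ⟨b ^ j, j, rfl⟩), rfl⟩
  refine ⟨Finite.of_surjective _ hsurj, ?_⟩
  rw [← Nat.card_zpowers, ← Nat.card_zpowers, ← Nat.card_prod]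
  exact Nat.card_le_card_of_surjective _ hsurj

end

theorem lift_zsGroup_of_eq_one {m : ℕ} {t s : ℤ} : ∀ x ∈ zsRels m t s,
    FreeGroup.lift ![(.of 0 : ZSGroup m t s), .of 1] x = 1 := by
  have hmk : FreeGroup.lift ![.of 0, .of 1] = PresentedGroup.mk (zsRels m t s) := by
    ext i
    fin_cases i <;> rfl
  exact fun x hx ↦ (DFunLike.congr_fun hmk x).trans (PresentedGroup.one_of_mem hx)

theorem closure_zsGroup_of (m : ℕ) (t s : ℤ) :
    Subgroup.closure {.of 0, .of 1} = (⊤ : Subgroup (ZSGroup m t s)) := by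
  rw [← PresentedGroup.closure_range_of, ← Matrix.range_cons_cons_empty _ _ ![]]
  congr
  ext i
  fin_cases i <;> rfl

section
variable {q : ℕ}

/-- The group `ℤ_q ⋊ D₄` in which `D₄` acts by inversion through `dihedralSign`. -/
abbrev CyclicDihedral (q : ℕ) := Zc q ⋊[signAction dihedralSign (Zc q)] DihedralGroup 4

namespace CyclicDihedral

variable (q) in
/-- The image in `ℤ_q ⋊ D₄` of the generator `a` of `G(2q,t,s)`. -/
def a : CyclicDihedral q := inl (.ofAdd 1) * inr (sr 0)

variable (q) in
/-- The image in `ℤ_q ⋊ D₄` of the generator `b` of `G(2q,t,s)`. -/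
def b : CyclicDihedral q := inr (r 1)

theorem a_pow (k : ℕ) : a q ^ k = inl (.ofAdd (k : ZMod q)) * inr (sr 0 ^ k) := by
  have hcomm : Commute (inl (.ofAdd 1) : CyclicDihedral q) (inr (sr 0)) := by
    have hsign : dihedralSign (sr 0) = 1 := by decide
    ext <;> simp [hsign]
  rw [a, hcomm.mul_pow, ← map_pow inl, ← map_pow inr, ← ofAdd_nsmul, nsmul_one]

theorem closure_a_b (hq : Odd q) : Subgroup.closure {a q, b q} = ⊤ := by
  set H := Subgroup.closure {a q, b q}
  have ha : a q ∈ H := Subgroup.subset_closure (by simp)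
  have hsr_pow : (sr 0 : DihedralGroup 4) ^ q = sr 0 := by
    obtain ⟨k, rfl⟩ := hq
    rw [pow_succ, pow_mul, sq, sr_mul_self, one_pow, one_mul]
  have hsr : inr (sr 0) ∈ H := by
    have := pow_mem ha q
    simpa [a_pow, hsr_pow] using this
  have hinr (d) : inr d ∈ H := by
    suffices (⊤ : Subgroup (DihedralGroup 4)) ≤ H.comap inr from this (Subgroup.mem_top d)
    rw [← closure_r_one_sr_zero, Subgroup.closure_le]
    rintro _ (rfl | rfl)
    exacts [Subgroup.subset_closure (by simp [b]), hsr]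
  have hinl (x) : inl x ∈ H := by
    obtain ⟨k, hk⟩ := ZMod.intCast_surjective x.toAdd
    have hone : inl (.ofAdd 1) ∈ H := (mul_mem_cancel_right hsr).mp ha
    convert zpow_mem hone k
    rw [← map_zpow, ← ofAdd_zsmul, zsmul_one, hk]
    simp
  refine (Subgroup.eq_top_iff' _).mpr fun z ↦ ?_
  rw [← inl_left_mul_inr_right z]
  exact mul_mem (hinl _) (hinr _)

theorem lift_zsRels_eq_one {t s : ℤ} (ht : (q : ℤ) ∣ t + 1) (hs : (q : ℤ) ∣ s + 1) :
    ∀ x ∈ zsRels (2 * q) t s, FreeGroup.lift ![a q, b q] x = 1 := by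
  have hsign : dihedralSign (r 1) = -1 ∧ dihedralSign (sr 1) = -1 := by decide
  refine (lift_zsRels_eq_one_iff ht hs).mpr ⟨?_, ?_, ?_, ?_⟩
  · rw [a_pow, pow_mul, sq, sr_mul_self, one_pow]
    simp
  · rw [b, ← map_pow, r_one_pow_n, map_one]
  · ext
    · simp [a, b, hsign]
    · simp [a, b]
  · rw [SemiconjBy, a_pow]
    ext
    · simp [b, hsign, sq]
    · simp [b, sq]

theorem nonempty_zsGroup_mulEquiv {t s : ℤ} (hq : Odd q) (ht : (q : ℤ) ∣ t + 1)
    (hs : (q : ℤ) ∣ s + 1) : Nonempty (ZSGroup (2 * q) t s ≃* CyclicDihedral q) := by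
  have rels := lift_zsRels_eq_one ht hs
  let f : ZSGroup (2 * q) t s →* CyclicDihedral q := PresentedGroup.toGroup rels
  have hf : Function.Surjective f := by
    rw [← MonoidHom.range_eq_top, ← top_le_iff, ← closure_a_b hq, Subgroup.closure_le]
    rintro _ (rfl | rfl)
    exacts [⟨.of 0, PresentedGroup.toGroup.of rels⟩, ⟨.of 1, PresentedGroup.toGroup.of rels⟩]
  obtain ⟨ha, hb, haba, hab⟩ := (lift_zsRels_eq_one_iff (a := (.of 0 : ZSGroup (2 * q) t s))
    (b := .of 1) ht hs).mp lift_zsGroup_of_eq_one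
  obtain ⟨_, hcard⟩ := finite_and_card_le_of_forall_eq_zpow_mul_zpow
    (isOfFinOrder_iff_pow_eq_one.mpr ⟨2 * q, by have := hq.pos; omega, ha⟩)
    (isOfFinOrder_iff_pow_eq_one.mpr ⟨4, by omega, hb⟩)
    (exists_eq_zpow_mul_zpow (closure_zsGroup_of _ t s) (exists_mul_zpow_eq haba hab))
  refine ⟨MulEquiv.ofBijective f (hf.bijective_of_nat_card_le (hcard.trans ?_))⟩
  calc _ ≤ (2 * q) * 4 := Nat.mul_le_mul (orderOf_le_of_pow_eq_one (by have := hq.pos; omega) ha)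
          (orderOf_le_of_pow_eq_one (by omega) hb)
    _ = Nat.card (CyclicDihedral q) := by
      rw [SemidirectProduct.card, DihedralGroup.nat_card, Nat.card_congr Multiplicative.toAdd,
        Nat.card_zmod]
      ring

theorem nonempty_mulAut_mulEquiv (hq1 : 1 < q) (hq : Odd q) :
    Nonempty (MulAut (CyclicDihedral q) ≃*
      (Zc q ⋊[unitsTwoMulAction q] (Zc 2 × (ZMod (2 * q))ˣ)) ⋊[1] Zc 2) := by
  have : Fact (1 < q) := ⟨hq1⟩
  have hcop : (Monoid.exponent (Zc q)).Coprime (Monoid.exponent (DihedralGroup 4)) := by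
    rw [DihedralGroup.exponent, Monoid.exponent_multiplicative, ZMod.exponent]
    exact (Nat.coprime_two_right.mpr hq).pow_right 2
  let units : (ZMod (2 * q))ˣ ≃* MulAut (Zc q) :=
    (MulEquiv.ofBijective _ (unitsMap_two_mul_bijective hq)).trans (unitsMulEquivMulAut q)
  let regroup : (Zc 2 × (ZMod (2 * q))ˣ) × Zc 2 ≃* signStabilizer dihedralSign × MulAut (Zc q) :=
    (MulEquiv.prodComm.trans MulEquiv.prodAssoc.symm).trans (dihedralAutEquiv.prodCongr units)
  exact ⟨(affineAutEquiv hcop dihedralSign_ne_one).symm.trans <|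
    (SemidirectProduct.congr (MulEquiv.refl _) regroup fun _ ↦ rfl).symm.trans <|
      semidirectFstEquiv (unitsTwoMulAction q)⟩

end CyclicDihedral

end

theorem dvd_add_one_of_coprime {q : ℕ} {t s : ℤ} (hq : Odd q)
    (hts : (q : ℤ) ∣ 4 * t * (s + 1)) (hst : (q : ℤ) ∣ 2 * (t + 1) * (s - 1))
    (ht : IsCoprime (q : ℤ) t) : (q : ℤ) ∣ t + 1 ∧ (q : ℤ) ∣ s + 1 := by
  have h2 : IsCoprime (q : ℤ) 2 := by
    exact_mod_cast Nat.isCoprime_iff_coprime.mpr (Nat.coprime_two_right.mpr hq)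
  have h4 : IsCoprime (q : ℤ) 4 := h2.mul_right h2
  have hs : (q : ℤ) ∣ s + 1 := (h4.mul_right ht).dvd_of_dvd_mul_left hts
  refine ⟨h4.dvd_of_dvd_mul_left ?_, hs⟩
  have := dvd_sub (hs.mul_left (2 * (t + 1))) hst
  rwa [show 2 * (t + 1) * (s + 1) - 2 * (t + 1) * (s - 1) = 4 * (t + 1) by ring] at this

theorem zs4m_aut_two_q_general {q : ℕ} {t s : ℤ} (hq1 : 1 < q) (hq : Odd q)
    (ht : (q : ℤ) ∣ t + 1) (hs : (q : ℤ) ∣ s + 1) :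
    Nonempty (MulAut (ZSGroup (2 * q) t s) ≃*
      (Zc q ⋊[unitsTwoMulAction q] (Zc 2 × (ZMod (2 * q))ˣ)) ⋊[1] Zc 2) := by
  obtain ⟨e⟩ := CyclicDihedral.nonempty_zsGroup_mulEquiv hq ht hs
  obtain ⟨f⟩ := CyclicDihedral.nonempty_mulAut_mulEquiv hq1 hq
  exact ⟨(MulAut.congr e).trans f⟩

/-- Let `G = G(m,t,s)` with `m = 2q`, `q > 1` odd, and `gcd(t,m) = 1`.
Then `Aut(G) ≅ (ℤ_{m/2} ⋊ (ℤ₂ × U(m))) ⋊ ℤ₂`. -/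
theorem zs4m_aut_two_q (m q : ℕ) (t s : ℤ) (hq1 : 1 < q) (hqodd : Odd q) (hm : m = 2 * q)
    (hs0 : 0 ≤ s) (hsm : s < m)
    (hG1 : 2 * s ^ 2 ≡ 2 [ZMOD (m : ℤ)])
    (hG2 : 4 * t * (s + 1) ≡ 0 [ZMOD (m : ℤ)])
    (hG3 : 2 * (t + 1) * (s - 1) ≡ 0 [ZMOD (m : ℤ)])
    (hG4 : Int.gcd s ((m : ℤ) / 2) = 1)
    (htm : Int.gcd t (m : ℤ) = 1) :
    ∃ (φ : Zc 2 × (ZMod m)ˣ →* MulAut (Zc (m / 2)))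
      (ψ : Zc 2 →* MulAut (Zc (m / 2) ⋊[φ] (Zc 2 × (ZMod m)ˣ))),
      Nonempty (MulAut (ZSGroup m t s) ≃*
        (Zc (m / 2) ⋊[φ] (Zc 2 × (ZMod m)ˣ)) ⋊[ψ] Zc 2) := by
  subst hm
  have hqm : (q : ℤ) ∣ (2 * q : ℕ) := Int.natCast_dvd_natCast.mpr (dvd_mul_left q 2)
  obtain ⟨ht, hs⟩ := dvd_add_one_of_coprime hqodd (hqm.trans (Int.modEq_zero_iff_dvd.mp hG2))
    (hqm.trans (Int.modEq_zero_iff_dvd.mp hG3))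
    ((Int.isCoprime_iff_gcd_eq_one.mpr htm).symm.of_isCoprime_of_dvd_left hqm)
  rw [Nat.mul_div_cancel_left q two_pos]
  exact ⟨_, _, zs4m_aut_two_q_general hq1 hqodd ht hs⟩
end

section
/- Let G = G(m,t,s) with m = 8q where q > 1 is odd, t odd, and gcd(t, m) = d. If 2t(s+1) ≡ 0 (mod m), then there exist homomorphisms making Aut(G) ≅ (ℤ_{m/(2d)} ⋊ (ℤ₂ × U(m))) ⋊ ℤ₂; if 2t(s+1) ≢ 0 (mod m), then there exists a homomorphism making Aut(G) ≅ ℤ_{m/(2d)} ⋊ (ℤ₂ × U(m)). -/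
/-!
Every element of `G(m,t,s)` is uniquely `b ^ i * a ^ x` with `i` modulo `4` and `x` modulo `m`;
uniqueness is read off an action on `ℤ₄ × ℤ_m`. When `m = 8q` with `q` and `t` odd, looking at
orders and squares forces an automorphism to have the form `a ↦ b ^ (2ε) * a ^ (2j+1)`,
`b ↦ b ^ (2η+1) * a ^ (2l)`, and such images define an automorphism exactly when `2j+1` is a unit
and `2l(s+1) = (εt + η + j)θ`, where the twist `θ = 2t(s+1)` is killed by `2` and so is `0` or
`m/2`. The units of `ℤ/mℤ` act by `a ↦ a ^ u`, suitably corrected on `b`.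

If `θ = 0`, the remaining automorphisms are generated by `b ↦ b * a ^ (2d)`, of order `m/2d`, and by
the two commuting involutions that change `ε` and `η`. If `θ = m/2`, changing `ε` forces `b` to move
as well; done together with `b ↦ b * a ^ (2d)` it is a single automorphism, again of order `m/2d`,
whose even powers account for all translations `b ↦ b * a ^ (2l)` modulo the units. Only one `ℤ₂`
factor is then left.
-/

open Multiplicative (ofAdd)

/-! ### Internal semidirect products -/

section SemidirectProduct

variable {N H U M : Type*} [Group N] [Group H] [Group U] [Group M]

theorem exists_semidirectProduct_injective (f : N →* M) (g : H →* M)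
    (hinj : ∀ n h, f n * g h = 1 → n = 1 ∧ h = 1)
    (hconj : ∀ h n, g h * f n * (g h)⁻¹ ∈ f.range) :
    ∃ (φ : H →* MulAut N) (e : N ⋊[φ] H →* M), Function.Injective e ∧
      ∀ n h, e ⟨n, h⟩ = f n * g h := by
  have hf : Function.Injective f :=
    (injective_iff_map_eq_one f).2 fun n hn => (hinj n 1 (by simp [hn])).1
  choose c hc using hconj
  let φ : H →* MulAut N :=
    { toFun := fun h =>
        { toFun := c h
          invFun := c h⁻¹
          left_inv := fun n => hf (by simp [hc, mul_assoc])
          right_inv := fun n => hf (by simp [hc, mul_assoc])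
          map_mul' := fun x y => hf (by simp [hc, mul_assoc]) }
      map_one' := by ext n; exact hf (by simp [hc])
      map_mul' := fun x y => by ext n; exact hf (by simp [hc, mul_assoc]) }
  let e : N ⋊[φ] H →* M := SemidirectProduct.lift f g fun h => by
    ext n
    simp [φ, hc]
  refine ⟨φ, e, (injective_iff_map_eq_one e).2 ?_, fun _ _ => rfl⟩
  rintro ⟨n, h⟩ hnh
  obtain ⟨rfl, rfl⟩ := hinj n h hnh
  rfl

/-- The homomorphism from the cyclic group of order `n` sending the generator to `x`. -/
def zcHom (n : ℕ) (x : M) (hx : x ^ n = 1) : Zc n →* M :=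
  AddMonoidHom.toMultiplicativeLeft
    (ZMod.lift n ⟨zmultiplesHom (Additive M) (Additive.ofMul x), by
      simpa using congrArg Additive.ofMul hx⟩)

theorem zcHom_intCast {n : ℕ} {x : M} (hx : x ^ n = 1) (k : ℤ) :
    zcHom n x hx (ofAdd (k : ZMod n)) = x ^ k := by
  change Additive.toMul (ZMod.lift n _ (k : ZMod n)) = x ^ k
  rw [ZMod.lift_coe]
  rfl

theorem zcHom_natCast {n : ℕ} {x : M} (hx : x ^ n = 1) (k : ℕ) :
    zcHom n x hx (ofAdd (k : ZMod n)) = x ^ k := by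
  simpa using zcHom_intCast hx k

theorem exists_eq_ofAdd_natCast {n : ℕ} [NeZero n] (z : Zc n) :
    ∃ k : ℕ, z = ofAdd (k : ZMod n) :=
  ⟨z.toAdd.val, by rw [ZMod.natCast_zmod_val, ofAdd_toAdd]⟩

theorem zc_two_cases (z : Zc 2) : z = 1 ∨ z = ofAdd 1 := by
  revert z; decide

theorem zcHom_two_ofAdd_one {x : M} (hx : x ^ 2 = 1) : zcHom 2 x hx (ofAdd 1) = x := by
  simpa using zcHom_natCast hx 1

theorem exists_semidirectProduct_zc_two_injective {f : N →* M} (hf : Function.Injective f) {y : M}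
    (hy : y ^ 2 = 1) (hconj : ∀ n, y * f n * y⁻¹ ∈ f.range) (hyf : y ∉ f.range) :
    ∃ (φ : Zc 2 →* MulAut N) (e : N ⋊[φ] Zc 2 →* M), Function.Injective e ∧
      f.range ≤ e.range ∧ y ∈ e.range := by
  obtain ⟨φ, e, he, hfg⟩ := exists_semidirectProduct_injective f (zcHom 2 y hy)
    (fun n z hnz => by
      rcases zc_two_cases z with rfl | rfl
      · exact ⟨(injective_iff_map_eq_one f).1 hf n (by simpa using hnz), rfl⟩
      · rw [zcHom_two_ofAdd_one] at hnz
        exact absurd ⟨n⁻¹, by rw [map_inv, inv_eq_of_mul_eq_one_right hnz]⟩ hyf)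
    (fun z n => by
      rcases zc_two_cases z with rfl | rfl
      · exact ⟨n, by simp⟩
      · simpa only [zcHom_two_ofAdd_one] using hconj n)
  refine ⟨φ, e, he, ?_, ⟨⟨1, ofAdd 1⟩, by rw [hfg, map_one, one_mul, zcHom_two_ofAdd_one]⟩⟩
  rintro _ ⟨n, rfl⟩
  exact ⟨⟨n, 1⟩, by rw [hfg, map_one, mul_one]⟩

/-- The elements `τ` and `ρ` and the homomorphism `σ` span an internal semidirect product
`ℤ_n ⋊ (ℤ₂ × U)`: the involution `ρ` commutes with the values of `σ`, both normalize the powers of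
`τ`, and the products `τ ^ k * σ u` and `τ ^ k * (ρ * σ u)` are pairwise distinct. -/
structure IsSemidirectFrame (n : ℕ) (τ ρ : M) (σ : U →* M) : Prop where
  pow_eq_one : τ ^ n = 1
  sq_eq_one : ρ ^ 2 = 1
  commute : ∀ u, Commute ρ (σ u)
  semiconjBy_involution : ∃ k : ℕ, SemiconjBy ρ τ (τ ^ k)
  semiconjBy : ∀ u, ∃ k : ℕ, SemiconjBy (σ u) τ (τ ^ k)
  dvd_and_eq_one : ∀ (k : ℕ) u, τ ^ k * σ u = 1 → n ∣ k ∧ u = 1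
  ne_one : ∀ (k : ℕ) u, τ ^ k * (ρ * σ u) ≠ 1

namespace IsSemidirectFrame

variable {n : ℕ} {τ ρ : M} {σ : U →* M}

/-- The complement `ℤ₂ × U` of the powers of `τ`. -/
def complementHom (F : IsSemidirectFrame n τ ρ σ) : Zc 2 × U →* M :=
  (zcHom 2 ρ F.sq_eq_one).noncommCoprod σ fun z u => by
    rcases zc_two_cases z with rfl | rfl
    · exact (map_one (zcHom 2 ρ F.sq_eq_one)).symm ▸ Commute.one_left _
    · exact (zcHom_two_ofAdd_one F.sq_eq_one).symm ▸ F.commute u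

theorem complementHom_one (F : IsSemidirectFrame n τ ρ σ) (u : U) :
    F.complementHom (1, u) = σ u := by
  simp [complementHom]

theorem complementHom_ofAdd_one (F : IsSemidirectFrame n τ ρ σ) (u : U) :
    F.complementHom (ofAdd 1, u) = ρ * σ u := by
  simp [complementHom, zcHom_two_ofAdd_one]

theorem exists_semiconjBy_complementHom (F : IsSemidirectFrame n τ ρ σ) (h : Zc 2 × U) :
    ∃ k : ℕ, SemiconjBy (F.complementHom h) τ (τ ^ k) := by
  obtain ⟨z, u⟩ := h
  obtain ⟨j, hj⟩ := F.semiconjBy u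
  obtain ⟨l, hl⟩ := F.semiconjBy_involution
  rcases zc_two_cases z with rfl | rfl
  · exact ⟨j, (F.complementHom_one u).symm ▸ hj⟩
  · refine ⟨l * j, (F.complementHom_ofAdd_one u).symm ▸ ?_⟩
    rw [pow_mul]
    exact (hl.pow_right j).mul_left hj

theorem eq_one_of_mul_complementHom_eq_one [NeZero n] (F : IsSemidirectFrame n τ ρ σ) {x : Zc n}
    {h : Zc 2 × U} (hxh : zcHom n τ F.pow_eq_one x * F.complementHom h = 1) : x = 1 ∧ h = 1 := by
  obtain ⟨k, rfl⟩ := exists_eq_ofAdd_natCast x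
  obtain ⟨z, u⟩ := h
  rw [zcHom_natCast] at hxh
  rcases zc_two_cases z with rfl | rfl
  · obtain ⟨hk, rfl⟩ := F.dvd_and_eq_one k u (by rwa [complementHom_one] at hxh)
    exact ⟨by rw [(ZMod.natCast_eq_zero_iff k n).2 hk, ofAdd_zero], rfl⟩
  · exact absurd (by rwa [complementHom_ofAdd_one] at hxh) (F.ne_one k u)

theorem exists_injective [NeZero n] (F : IsSemidirectFrame n τ ρ σ) :
    ∃ (φ : Zc 2 × U →* MulAut (Zc n)) (e : Zc n ⋊[φ] (Zc 2 × U) →* M),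
      Function.Injective e ∧
      ∀ x, x ∈ e.range ↔ ∃ (k : ℕ) (u : U), x = τ ^ k * σ u ∨ x = τ ^ k * (ρ * σ u) := by
  obtain ⟨φ, e, he, hfg⟩ := exists_semidirectProduct_injective (zcHom n τ F.pow_eq_one)
    F.complementHom (fun _ _ => F.eq_one_of_mul_complementHom_eq_one)
    (fun h x => by
      obtain ⟨k, rfl⟩ := exists_eq_ofAdd_natCast x
      obtain ⟨l, hl⟩ := F.exists_semiconjBy_complementHom h
      refine ⟨ofAdd ((l * k : ℕ) : ZMod n), ?_⟩
      rw [zcHom_natCast, zcHom_natCast, (hl.pow_right k).eq, mul_inv_cancel_right, pow_mul])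
  refine ⟨φ, e, he, fun x => ⟨?_, ?_⟩⟩
  · rintro ⟨⟨y, z, u⟩, rfl⟩
    obtain ⟨k, rfl⟩ := exists_eq_ofAdd_natCast y
    refine ⟨k, u, ?_⟩
    rw [hfg, zcHom_natCast]
    rcases zc_two_cases z with rfl | rfl
    · exact .inl (by rw [complementHom_one])
    · exact .inr (by rw [complementHom_ofAdd_one])
  · rintro ⟨k, u, rfl | rfl⟩
    · exact ⟨⟨ofAdd (k : ZMod n), (1, u)⟩, by rw [hfg, zcHom_natCast, complementHom_one]⟩
    · exact ⟨⟨ofAdd (k : ZMod n), (ofAdd 1, u)⟩, by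
        rw [hfg, zcHom_natCast, complementHom_ofAdd_one]⟩

end IsSemidirectFrame

end SemidirectProduct

/-! ### Normal forms -/

namespace ZSGroup

variable {m : ℕ} {t s : ℤ}

/-- The elements `x` and `y` satisfy the defining relations of `G(m,t,s)`. -/
structure SatisfiesRels (m : ℕ) (t s : ℤ) {H : Type*} [Group H] (x y : H) : Prop where
  pow_m : x ^ m = 1
  pow_four : y ^ 4 = 1
  mul_eq : x * y = y ^ 3 * x ^ (2 * t + 1)
  sq_mul_eq : x ^ 2 * y = y * x ^ (2 * s)

variable {H : Type*} [Group H] {x y : H}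

theorem SatisfiesRels.lift_eq_one (h : SatisfiesRels m t s x y) :
    ∀ r ∈ zsRels m t s, FreeGroup.lift ![x, y] r = 1 := by
  rintro r (rfl | rfl | rfl | rfl)
  · simpa using h.pow_m
  · simpa using h.pow_four
  · rw [map_mul, map_inv, mul_inv_eq_one]
    simpa using h.mul_eq
  · rw [map_mul, map_inv, mul_inv_eq_one]
    simpa using h.sq_mul_eq

/-- The homomorphism from `G(m,t,s)` determined by the images of the two generators. -/
def lift (h : SatisfiesRels m t s x y) : ZSGroup m t s →* H :=
  PresentedGroup.toGroup h.lift_eq_one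

/-- The generator `a` of `G(m,t,s)`. -/
def a : ZSGroup m t s := PresentedGroup.of 0

/-- The generator `b` of `G(m,t,s)`. -/
def b : ZSGroup m t s := PresentedGroup.of 1

@[simp]
theorem lift_a (h : SatisfiesRels m t s x y) : lift h a = x :=
  PresentedGroup.toGroup.of h.lift_eq_one

@[simp]
theorem lift_b (h : SatisfiesRels m t s x y) : lift h b = y :=
  PresentedGroup.toGroup.of h.lift_eq_one

theorem satisfiesRels : SatisfiesRels m t s (a : ZSGroup m t s) b where
  pow_m := PresentedGroup.one_of_mem (x := FreeGroup.of 0 ^ m) (by simp)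
  pow_four := PresentedGroup.one_of_mem (x := FreeGroup.of 1 ^ 4) (by simp)
  mul_eq := mul_inv_eq_one.1 <| PresentedGroup.one_of_mem (rels := zsRels m t s)
    (x := FreeGroup.of 0 * FreeGroup.of 1 *
      (FreeGroup.of 1 ^ 3 * FreeGroup.of 0 ^ (2 * t + 1))⁻¹) (by simp)
  sq_mul_eq := mul_inv_eq_one.1 <| PresentedGroup.one_of_mem (rels := zsRels m t s)
    (x := FreeGroup.of 0 ^ 2 * FreeGroup.of 1 *
      (FreeGroup.of 1 * FreeGroup.of 0 ^ (2 * s))⁻¹) (by simp)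

theorem closure_a_b : Subgroup.closure {(a : ZSGroup m t s), b} = ⊤ := by
  rw [← PresentedGroup.closure_range_of (zsRels m t s)]
  congr 1
  ext g
  simp [Fin.exists_fin_two, a, b, eq_comm]

theorem hom_ext {f g : ZSGroup m t s →* H} (ha : f a = g a) (hb : f b = g b) : f = g :=
  MonoidHom.eq_of_eqOn_dense closure_a_b fun x hx => by
    rcases hx with rfl | rfl
    exacts [ha, hb]

/-- The power of `a` with exponent in `ZMod m`. -/
def aPow (x : ZMod m) : ZSGroup m t s :=
  zcHom m a satisfiesRels.pow_m (ofAdd x)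

local notation "A" => aPow (m := m) (t := t) (s := s)

local notation "B" => b (m := m) (t := t) (s := s)

theorem aPow_intCast (k : ℤ) : A k = a ^ k :=
  zcHom_intCast _ k

theorem aPow_one : A 1 = a := by
  simpa using aPow_intCast (m := m) (t := t) (s := s) 1

@[simp]
theorem aPow_zero : A 0 = 1 := map_one _

theorem aPow_add (x y : ZMod m) : A (x + y) = A x * A y :=
  map_mul (zcHom m a satisfiesRels.pow_m) (ofAdd x) (ofAdd y)

theorem aPow_zpow (x : ZMod m) (k : ℤ) : A x ^ k = A (k * x) := by
  rw [aPow, ← map_zpow, ← ofAdd_zsmul, zsmul_eq_mul, aPow]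

theorem aPow_pow (x : ZMod m) (k : ℕ) : A x ^ k = A (k * x) := by
  simpa using aPow_zpow x k

theorem aPow_two_mul_mul_b (k : ZMod m) :
    A (2 * k) * B = B * A (2 * (s * k)) := by
  obtain ⟨k, rfl⟩ := ZMod.intCast_surjective k
  have h : SemiconjBy B ((a ^ (2 * s)) ^ k) ((a ^ 2) ^ k) :=
    SemiconjBy.zpow_right satisfiesRels.sq_mul_eq.symm k
  rw [← zpow_natCast, ← zpow_mul, ← zpow_mul, ← aPow_intCast, ← aPow_intCast] at h
  simpa [mul_assoc] using h.eq.symm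

/-- The numerical conditions on `m`, `t`, `s` under which `G(m,t,s)` has order `4m`, written in
`ZMod m`. -/
structure Admissible (m : ℕ) (t s : ℤ) : Prop where
  even : Even m
  two_mul_sq : (2 * s ^ 2 : ZMod m) = 2
  four_mul : (4 * t * (s + 1) : ZMod m) = 0
  two_mul_mul : (2 * (t + 1) * (s - 1) : ZMod m) = 0

theorem exists_eq_two_mul_or (x : ZMod m) : ∃ k, x = 2 * k ∨ x = 2 * k + 1 := by
  obtain ⟨x, rfl⟩ := ZMod.intCast_surjective x
  obtain ⟨k, rfl | rfl⟩ := x.even_or_odd'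
  exacts [⟨k, .inl (by push_cast; rfl)⟩, ⟨k, .inr (by push_cast; rfl)⟩]

theorem aPow_mul_b_of_odd (P : Admissible m t s) (k : ZMod m) :
    A (2 * k + 1) * B = B ^ 3 * A (2 * (s * k + t) + 1) := by
  have hb3 : A (2 * k) * B ^ 3 = B ^ 3 * A (2 * (s * k)) := by
    have hs : 2 * (s * (s * (s * k))) = 2 * (s * k) := by
      linear_combination s * k * P.two_mul_sq
    rw [pow_succ, pow_two, ← mul_assoc, ← mul_assoc, aPow_two_mul_mul_b, mul_assoc b,
      aPow_two_mul_mul_b, ← mul_assoc, mul_assoc (B * B), aPow_two_mul_mul_b, hs, ← mul_assoc]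
  calc A (2 * k + 1) * B = A (2 * k) * (a * b) := by
        rw [aPow_add, aPow_one, mul_assoc]
    _ = A (2 * k) * B ^ 3 * A (2 * t + 1) := by
        rw [satisfiesRels.mul_eq, ← aPow_intCast, mul_assoc]
        push_cast
        rfl
    _ = B ^ 3 * A (2 * (s * k + t) + 1) := by
        rw [hb3, mul_assoc, ← aPow_add]
        congr 2
        ring

theorem exists_eq_pow_mul_aPow (P : Admissible m t s) (g : ZSGroup m t s) :
    ∃ (i : ℕ) (x : ZMod m), g = B ^ i * A x := by
  have mul_b (g : ZSGroup m t s) (hg : ∃ (i : ℕ) (x : ZMod m), g = B ^ i * A x) :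
      ∃ (i : ℕ) (x : ZMod m), g * B = B ^ i * A x := by
    obtain ⟨i, x, rfl⟩ := hg
    obtain ⟨k, rfl | rfl⟩ := exists_eq_two_mul_or x
    · exact ⟨i + 1, _, by rw [mul_assoc, aPow_two_mul_mul_b, ← mul_assoc, pow_succ]⟩
    · exact ⟨i + 3, _, by rw [mul_assoc, aPow_mul_b_of_odd P, ← mul_assoc, pow_add]⟩
  have mul_a (k : ℤ) (g : ZSGroup m t s) (hg : ∃ (i : ℕ) (x : ZMod m), g = B ^ i * A x) :
      ∃ (i : ℕ) (x : ZMod m), g * a ^ k = B ^ i * A x := by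
    obtain ⟨i, x, rfl⟩ := hg
    exact ⟨i, x + k, by rw [aPow_add, aPow_intCast, mul_assoc]⟩
  have hb : B⁻¹ = B * B * B :=
    inv_eq_of_mul_eq_one_left (by
      rw [← pow_three', ← pow_succ]
      exact satisfiesRels.pow_four)
  have hg : g ∈ Subgroup.closure {(a : ZSGroup m t s), b} := closure_a_b ▸ Subgroup.mem_top g
  induction hg using Subgroup.closure_induction_right with
  | one => exact ⟨0, 0, by simp⟩
  | mul_right g _ y hy ih =>
    rcases hy with rfl | rfl
    · simpa using mul_a 1 g ih
    · exact mul_b g ih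
  | mul_inv_cancel g _ y hy ih =>
    rcases hy with rfl | rfl
    · simpa using mul_a (-1) g ih
    · rw [hb, ← mul_assoc, ← mul_assoc]
      exact mul_b _ (mul_b _ (mul_b g ih))

/-- The permutations of `ZMod 4 × ZMod m` translating each fibre `{i} × ZMod m` by `f i`. -/
def fibreShift : Multiplicative (ZMod 4 → ZMod m) →* Equiv.Perm (ZMod 4 × ZMod m) where
  toFun f := Equiv.prodShear (Equiv.refl _) fun i => Equiv.addRight (f.toAdd i)
  map_one' := by ext <;> simp
  map_mul' f g := by ext <;> simp [add_left_comm, add_comm]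

theorem fibreShift_zpow_apply (f : ZMod 4 → ZMod m) (k : ℤ) (p : ZMod 4 × ZMod m) :
    (fibreShift (ofAdd f) ^ k) p = (p.1, p.2 + k * f p.1) := by
  rw [← map_zpow, ← ofAdd_zsmul]
  simp [fibreShift]

/-- The offsets of left multiplication by `a` on normal forms: `a * b ^ i * aPow x` is
`b ^ (-i) * aPow (x + aOffset i)`. -/
def aOffset (m : ℕ) (t s : ℤ) : ZMod 4 → ZMod m :=
  ![1, 2 * t + 1, 1 + 2 * t * (s + 1), 2 * t + 1 + 2 * t * (s + 1)]

/-- The offsets of left multiplication by `a ^ 2` on normal forms. -/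
def aSqOffset (m : ℕ) (s : ℤ) : ZMod 4 → ZMod m :=
  ![2, 2 * s, 2, 2 * s]

theorem aOffset_add_neg (P : Admissible m t s) (i : ZMod 4) :
    aOffset m t s i + aOffset m t s (-i) = aSqOffset m s i := by
  fin_cases i
  · change (1 : ZMod m) + 1 = 2
    ring
  · change (2 * t + 1 : ZMod m) + (2 * t + 1 + 2 * t * (s + 1)) = 2 * s
    linear_combination P.four_mul - P.two_mul_mul
  · change (1 + 2 * t * (s + 1) : ZMod m) + (1 + 2 * t * (s + 1)) = 2
    linear_combination P.four_mul
  · change (2 * t + 1 + 2 * t * (s + 1) : ZMod m) + (2 * t + 1) = 2 * s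
    linear_combination P.four_mul - P.two_mul_mul

theorem aOffset_add_one (P : Admissible m t s) (i : ZMod 4) :
    aOffset m t s (i + 1) = aOffset m t s i + t * aSqOffset m s i := by
  fin_cases i
  · change (2 * t + 1 : ZMod m) = 1 + t * 2
    ring
  · change (1 + 2 * t * (s + 1) : ZMod m) = 2 * t + 1 + t * (2 * s)
    ring
  · change (2 * t + 1 + 2 * t * (s + 1) : ZMod m) = 1 + 2 * t * (s + 1) + t * 2
    ring
  · change (1 : ZMod m) = 2 * t + 1 + 2 * t * (s + 1) + t * (2 * s)
    linear_combination -P.four_mul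

theorem aSqOffset_add_one (P : Admissible m t s) (i : ZMod 4) :
    aSqOffset m s (i + 1) = s * aSqOffset m s i := by
  fin_cases i
  · exact mul_comm (2 : ZMod m) s
  · change (2 : ZMod m) = s * (2 * s)
    linear_combination -P.two_mul_sq
  · exact mul_comm (2 : ZMod m) s
  · change (2 : ZMod m) = s * (2 * s)
    linear_combination -P.two_mul_sq

theorem natCast_mul_aSqOffset {k : ℕ} (hk : m = 2 * k) (i : ZMod 4) :
    (k * aSqOffset m s i : ZMod m) = 0 := by
  have hk0 : (2 * k : ZMod m) = 0 := by
    rw [← Nat.cast_ofNat, ← Nat.cast_mul, ← hk, ZMod.natCast_self]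
  have hi : aSqOffset m s i = 2 ∨ aSqOffset m s i = 2 * s := by
    fin_cases i
    exacts [.inl rfl, .inr rfl, .inl rfl, .inr rfl]
  rcases hi with hi | hi <;> rw [hi]
  · linear_combination hk0
  · linear_combination s * hk0

/-- Left multiplication by `a` on the pairs `(i, x)` encoding `b ^ i * aPow x`. -/
def permA (m : ℕ) (t s : ℤ) : Equiv.Perm (ZMod 4 × ZMod m) :=
  Equiv.prodShear (Equiv.neg _) fun i => Equiv.addRight (aOffset m t s i)

/-- Left multiplication by `b` on the pairs `(i, x)` encoding `b ^ i * aPow x`. -/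
def permB (m : ℕ) : Equiv.Perm (ZMod 4 × ZMod m) :=
  Equiv.prodCongr (Equiv.addRight 1) (Equiv.refl _)

theorem permA_apply (p : ZMod 4 × ZMod m) :
    permA m t s p = (-p.1, p.2 + aOffset m t s p.1) := rfl

theorem permB_apply (p : ZMod 4 × ZMod m) : permB m p = (p.1 + 1, p.2) := rfl

theorem permB_pow_apply (k : ℕ) (p : ZMod 4 × ZMod m) : (permB m ^ k) p = (p.1 + k, p.2) := by
  induction k with
  | zero => simp
  | succ k ih => rw [pow_succ', Equiv.Perm.mul_apply, ih, permB_apply, Nat.cast_succ, add_assoc]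

theorem permA_zpow_two_mul_apply (P : Admissible m t s) (k : ℤ) (p : ZMod 4 × ZMod m) :
    (permA m t s ^ (2 * k)) p = (p.1, p.2 + k * aSqOffset m s p.1) := by
  have hsq : permA m t s ^ 2 = fibreShift (ofAdd (aSqOffset m s)) := by
    ext1 p
    rw [pow_two, Equiv.Perm.mul_apply, permA_apply, permA_apply, neg_neg, add_assoc,
      aOffset_add_neg P]
    rfl
  rw [zpow_mul, zpow_ofNat, hsq, fibreShift_zpow_apply]

theorem satisfiesRels_perm (P : Admissible m t s) :
    SatisfiesRels m t s (permA m t s) (permB m) where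
  pow_m := by
    obtain ⟨k, hk⟩ := even_iff_exists_two_mul.1 P.even
    ext1 p
    rw [← zpow_natCast, show (m : ℤ) = 2 * k by omega, permA_zpow_two_mul_apply P,
      Int.cast_natCast, natCast_mul_aSqOffset hk, add_zero, Equiv.Perm.one_apply]
  pow_four := by
    ext1 p
    rw [permB_pow_apply]
    exact Prod.ext (add_zero p.1) rfl
  mul_eq := by
    have hneg (i : ZMod 4) : -(i + 1) = -i + (3 : ℕ) := by revert i; decide
    ext1 p
    rw [add_comm, zpow_one_add, Equiv.Perm.mul_apply, Equiv.Perm.mul_apply,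
      Equiv.Perm.mul_apply, permA_zpow_two_mul_apply P, permB_pow_apply, permB_apply, permA_apply,
      permA_apply, aOffset_add_one P, hneg, add_right_comm, add_assoc p.2]
  sq_mul_eq := by
    have hsq : permA m t s ^ 2 = permA m t s ^ (2 * 1 : ℤ) := rfl
    ext1 p
    rw [hsq, Equiv.Perm.mul_apply, Equiv.Perm.mul_apply, permA_zpow_two_mul_apply P,
      permA_zpow_two_mul_apply P, permB_apply, permB_apply, aSqOffset_add_one P, Int.cast_one,
      one_mul]

theorem permA_zpow_apply_zero (P : Admissible m t s) (k : ℤ) :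
    (permA m t s ^ k) (0, 0) = (0, (k : ZMod m)) := by
  have h0 : aOffset m t s 0 = 1 := rfl
  have h1 : aSqOffset m s 0 = 2 := rfl
  obtain ⟨l, rfl | rfl⟩ := k.even_or_odd'
  · rw [permA_zpow_two_mul_apply P, h1, zero_add, mul_comm]
    push_cast
    rfl
  · rw [add_comm, zpow_one_add, Equiv.Perm.mul_apply, permA_zpow_two_mul_apply P, h1, permA_apply,
      h0, neg_zero, zero_add, mul_comm, add_comm]
    push_cast
    rfl

theorem b_pow_eq {i j : ℕ} (h : i ≡ j [MOD 4]) : B ^ i = B ^ j :=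
  pow_eq_pow_of_modEq h satisfiesRels.pow_four

theorem pow_mul_aPow_eq_iff (P : Admissible m t s) {i j : ℕ} {x y : ZMod m} :
    B ^ i * A x = B ^ j * A y ↔ i ≡ j [MOD 4] ∧ x = y := by
  have hcoord (i : ℕ) (x : ZMod m) :
      lift (satisfiesRels_perm P) (B ^ i * A x) (0, 0) = ((i : ZMod 4), x) := by
    obtain ⟨k, rfl⟩ := ZMod.intCast_surjective x
    rw [aPow_intCast, map_mul, map_pow, map_zpow, lift_a, lift_b, Equiv.Perm.mul_apply,
      permA_zpow_apply_zero P, permB_pow_apply, zero_add]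
  constructor
  · intro h
    have h' := congrArg (fun g => lift (satisfiesRels_perm P) g (0, 0)) h
    simpa only [hcoord, Prod.mk.injEq, ZMod.natCast_eq_natCast_iff] using h'
  · rintro ⟨hij, rfl⟩
    rw [b_pow_eq hij]

theorem finite [NeZero m] (P : Admissible m t s) : Finite (ZSGroup m t s) := by
  refine .of_surjective (fun p : Fin 4 × ZMod m => B ^ (p.1 : ℕ) * A p.2) fun g => ?_
  obtain ⟨i, x, rfl⟩ := exists_eq_pow_mul_aPow P g
  exact ⟨⟨⟨i % 4, Nat.mod_lt _ four_pos⟩, x⟩, (pow_mul_aPow_eq_iff P).2 ⟨Nat.mod_mod i 4, rfl⟩⟩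

local notation "θ" => (2 * (t : ZMod m) * (s + 1))

theorem Admissible.two_mul_twist (P : Admissible m t s) : 2 * θ = 0 := by
  linear_combination P.four_mul

theorem Admissible.mul_twist (P : Admissible m t s) : s * θ = θ := by
  linear_combination t * P.two_mul_sq

theorem Admissible.twist_mul_odd (P : Admissible m t s) (k : ZMod m) : θ * (2 * k + 1) = θ := by
  linear_combination k * P.two_mul_twist

theorem Admissible.odd_ne_even (P : Admissible m t s) (k l : ZMod m) : 2 * k + 1 ≠ 2 * l := by
  intro h
  have h2 := congrArg (ZMod.castHom P.even.two_dvd (ZMod 2)) h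
  rw [map_add, map_mul, map_mul, map_one, map_ofNat, show (2 : ZMod 2) = 0 from rfl, zero_mul,
    zero_mul] at h2
  exact absurd h2 (by decide)

theorem Admissible.exists_odd_of_isUnit (P : Admissible m t s) {u : ZMod m} (hu : IsUnit u) :
    ∃ j, u = 2 * j + 1 := by
  obtain ⟨j, rfl | rfl⟩ := exists_eq_two_mul_or u
  · obtain ⟨v, hv⟩ := hu.exists_right_inv
    exact absurd (by rw [← hv]; ring) (P.odd_ne_even 0 (j * v))
  · exact ⟨j, rfl⟩

theorem aPow_two_mul_mul_b_pow_even (P : Admissible m t s) (k : ZMod m) (ε : ℕ) :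
    A (2 * k) * B ^ (2 * ε) = B ^ (2 * ε) * A (2 * k) := by
  have hsq : Commute (A (2 * k)) (B ^ 2) := by
    rw [commute_iff_eq, pow_two, ← mul_assoc, aPow_two_mul_mul_b, mul_assoc, aPow_two_mul_mul_b,
      ← mul_assoc]
    congr 2
    linear_combination k * P.two_mul_sq
  rw [pow_mul]
  exact hsq.pow_right ε

theorem aPow_two_mul_mul_b_pow_odd (P : Admissible m t s) (k : ZMod m) (η : ℕ) :
    A (2 * k) * B ^ (2 * η + 1) = B ^ (2 * η + 1) * A (2 * (s * k)) := by
  rw [pow_succ, ← mul_assoc, aPow_two_mul_mul_b_pow_even P, mul_assoc, aPow_two_mul_mul_b,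
    ← mul_assoc]

theorem aPow_mul_b_pow_even (P : Admissible m t s) (x : ZMod m) (ε : ℕ) :
    A x * B ^ (2 * ε) = B ^ (2 * ε) * A (x + ε * θ * x) := by
  have hsq (x : ZMod m) : A x * B ^ 2 = B ^ 2 * A (x + θ * x) := by
    obtain ⟨k, rfl | rfl⟩ := exists_eq_two_mul_or x
    · refine (aPow_two_mul_mul_b_pow_even P k 1).trans ?_
      congr 2
      linear_combination -k * P.two_mul_twist
    · rw [pow_two, ← mul_assoc, aPow_mul_b_of_odd P, mul_assoc, aPow_mul_b_of_odd P, ← mul_assoc,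
        ← pow_add, b_pow_eq (show 3 + 3 ≡ 2 [MOD 4] from rfl),
        ← pow_two]
      congr 2
      linear_combination k * P.two_mul_sq - k * P.two_mul_twist
  induction ε with
  | zero => simp
  | succ ε ih =>
    rw [Nat.mul_succ, pow_add, ← mul_assoc, ih, mul_assoc, hsq, ← mul_assoc]
    congr 2
    push_cast
    linear_combination ε * x * t * (s + 1) * P.two_mul_twist

theorem aPow_odd_mul_b_pow_odd (P : Admissible m t s) (j : ZMod m) (η : ℕ) :
    A (2 * j + 1) * B ^ (2 * η + 1) = B ^ (2 * η + 3) * A (2 * (s * j + t) + 1 + η * θ) := by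
  have hodd : 2 * j + 1 + η * θ * (2 * j + 1) = 2 * (j + η * t * (s + 1)) + 1 := by
    linear_combination η * j * P.two_mul_twist
  rw [pow_succ, ← mul_assoc, aPow_mul_b_pow_even P, hodd, mul_assoc, aPow_mul_b_of_odd P,
    ← mul_assoc, ← pow_add]
  congr 2
  linear_combination η * P.mul_twist

theorem b_pow_even_mul_aPow_sq (P : Admissible m t s) (ε : ℕ) (x : ZMod m) :
    (B ^ (2 * ε) * A x) ^ 2 = A (2 * x + ε * θ * x) := by
  rw [pow_two, mul_assoc, ← mul_assoc (A x), aPow_mul_b_pow_even P, ← mul_assoc, ← mul_assoc,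
    ← pow_add, mul_assoc, ← aPow_add,
    b_pow_eq (show 2 * ε + 2 * ε ≡ 0 [MOD 4] by rw [Nat.ModEq]; omega), pow_zero, one_mul]
  congr 1
  ring

theorem b_pow_even_mul_aPow_odd_zpow (P : Admissible m t s) (ε : ℕ) (j : ZMod m) (k : ℤ) :
    (B ^ (2 * ε) * A (2 * j + 1)) ^ (2 * k) = A (2 * (k * (2 * j + 1 + ε * t * (s + 1)))) := by
  rw [zpow_mul, zpow_ofNat, b_pow_even_mul_aPow_sq P, aPow_zpow]
  congr 1
  linear_combination k * ε * P.twist_mul_odd j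

theorem b_pow_odd_mul_aPow_pow_even (P : Admissible m t s) (η k : ℕ) (l : ZMod m) :
    (B ^ (2 * η + 1) * A (2 * l)) ^ (2 * k) = B ^ (2 * k) * A (2 * (k * (l * (s + 1)))) := by
  have hsq : (B ^ (2 * η + 1) * A (2 * l)) ^ 2 = B ^ (2 * 1) * A (2 * (l * (s + 1))) := by
    rw [pow_two, mul_assoc, ← mul_assoc (A (2 * l)), aPow_two_mul_mul_b_pow_odd P, ← mul_assoc,
      ← mul_assoc, ← pow_add, mul_assoc, ← aPow_add,
      b_pow_eq (show 2 * η + 1 + (2 * η + 1) ≡ 2 * 1 [MOD 4] by rw [Nat.ModEq]; omega)]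
    congr 2
    ring
  have hcomm : Commute (B ^ (2 * 1)) (A (2 * (l * (s + 1)))) :=
    (aPow_two_mul_mul_b_pow_even P _ 1).symm
  rw [pow_mul, hsq, hcomm.mul_pow, ← pow_mul, mul_one, aPow_pow]
  congr 2
  ring

theorem b_pow_odd_mul_aPow_pow_odd (P : Admissible m t s) (η k : ℕ) (l : ZMod m) :
    (B ^ (2 * η + 1) * A (2 * l)) ^ (2 * k + 1) =
      B ^ (2 * (η + k) + 1) * A (2 * (l * (1 + k * (s + 1)))) := by
  rw [pow_succ, b_pow_odd_mul_aPow_pow_even P, mul_assoc, ← mul_assoc (A _),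
    aPow_two_mul_mul_b_pow_odd P, ← mul_assoc, ← mul_assoc, ← pow_add, mul_assoc, ← aPow_add]
  congr 2
  · ring
  · linear_combination k * l * P.two_mul_sq

/-! ### Automorphisms as quadruples of exponents -/

/-- The automorphism `φ` sends `a` to `b ^ (2ε) a ^ (2j+1)` and `b` to `b ^ (2η+1) a ^ (2l)`.
Halving the exponents keeps parities visible; the quadruple `(ε, η, j, l)` determines `φ`, which in
turn determines only `ε` and `η` modulo `2` and the doubles of `j` and `l`. -/
def HasImages (φ : MulAut (ZSGroup m t s)) (ε η : ℕ) (j l : ZMod m) : Prop :=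
  φ a = B ^ (2 * ε) * A (2 * j + 1) ∧ φ b = B ^ (2 * η + 1) * A (2 * l)

theorem aut_ext {φ ψ : MulAut (ZSGroup m t s)} (ha : φ a = ψ a) (hb : φ b = ψ b) : φ = ψ :=
  MulEquiv.toMonoidHom_injective (hom_ext ha hb)

theorem map_aPow_two_mul (P : Admissible m t s) {φ : MulAut (ZSGroup m t s)} {ε : ℕ} {j : ZMod m}
    (h : φ a = B ^ (2 * ε) * A (2 * j + 1)) (k : ZMod m) :
    φ (A (2 * k)) = A (2 * (k * (2 * j + 1 + ε * t * (s + 1)))) := by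
  obtain ⟨k, rfl⟩ := ZMod.intCast_surjective k
  have hk : (2 * k : ZMod m) = ((2 * k : ℤ) : ZMod m) := by push_cast; rfl
  rw [hk, aPow_intCast, map_zpow, h, b_pow_even_mul_aPow_odd_zpow P]

namespace HasImages

variable {φ φ' : MulAut (ZSGroup m t s)} {ε ε' η η' : ℕ} {j j' l l' : ZMod m}

theorem one : HasImages (1 : MulAut (ZSGroup m t s)) 0 0 0 0 :=
  ⟨by simp [aPow_one], by simp⟩

theorem eq_iff (P : Admissible m t s) (h : HasImages φ ε η j l) (h' : HasImages φ' ε' η' j' l') :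
    φ = φ' ↔ ε ≡ ε' [MOD 2] ∧ η ≡ η' [MOD 2] ∧ 2 * j = 2 * j' ∧ 2 * l = 2 * l' := by
  have hε : 2 * ε ≡ 2 * ε' [MOD 4] ↔ ε ≡ ε' [MOD 2] := by
    rw [Nat.ModEq, Nat.ModEq]; omega
  have hη : 2 * η + 1 ≡ 2 * η' + 1 [MOD 4] ↔ η ≡ η' [MOD 2] := by
    rw [Nat.ModEq, Nat.ModEq]; omega
  have hext : φ = φ' ↔ φ a = φ' a ∧ φ b = φ' b :=
    ⟨fun h => h ▸ ⟨rfl, rfl⟩, fun h => aut_ext h.1 h.2⟩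
  rw [hext, h.1, h.2, h'.1, h'.2, pow_mul_aPow_eq_iff P, pow_mul_aPow_eq_iff P, hε, hη,
    add_left_inj]
  tauto

theorem congr (h : HasImages φ ε η j l) (hε : ε ≡ ε' [MOD 2]) (hη : η ≡ η' [MOD 2])
    (hj : 2 * j = 2 * j') (hl : 2 * l = 2 * l') : HasImages φ ε' η' j' l' := by
  rw [Nat.ModEq] at hε hη
  have hε4 : 2 * ε ≡ 2 * ε' [MOD 4] := by rw [Nat.ModEq]; omega
  have hη4 : 2 * η + 1 ≡ 2 * η' + 1 [MOD 4] := by rw [Nat.ModEq]; omega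
  exact ⟨by rw [h.1, hj, b_pow_eq hε4], by rw [h.2, hl, b_pow_eq hη4]⟩

theorem map_aPow_two_mul_add_one (P : Admissible m t s) (h : HasImages φ ε η j l) (k : ZMod m) :
    φ (A (2 * k + 1)) =
      B ^ (2 * ε) * A (2 * (k * (2 * j + 1 + ε * t * (s + 1)) + j) + 1) := by
  rw [aPow_add, map_mul, map_aPow_two_mul P h.1, aPow_one, h.1, ← mul_assoc,
    aPow_two_mul_mul_b_pow_even P, mul_assoc, ← aPow_add]
  congr 2
  ring

theorem mul (P : Admissible m t s) (h : HasImages φ ε η j l) (h' : HasImages φ' ε' η' j' l') :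
    HasImages (φ * φ') (ε + ε') (η + η')
      (j + ε' * (l * (s + 1)) + (2 * j + 1 + ε * t * (s + 1)) * j')
      (l * (1 + η' * (s + 1)) + (2 * j + 1 + ε * t * (s + 1)) * l') := by
  constructor
  · rw [MulAut.mul_apply, h'.1, map_mul, map_pow, h.2, b_pow_odd_mul_aPow_pow_even P,
      map_aPow_two_mul_add_one P h, mul_assoc, ← mul_assoc (A _),
      aPow_two_mul_mul_b_pow_even P, ← mul_assoc, ← mul_assoc, ← pow_add, mul_assoc, ← aPow_add]
    congr 2 <;> ring
  · rw [MulAut.mul_apply, h'.2, map_mul, map_pow, h.2, b_pow_odd_mul_aPow_pow_odd P,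
      map_aPow_two_mul P h.1, mul_assoc, ← aPow_add]
    congr 2
    ring

end HasImages

theorem mul_eq_iff_images (P : Admissible m t s) (ε η : ℕ) (j l : ZMod m) :
    B ^ (2 * ε) * A (2 * j + 1) * (B ^ (2 * η + 1) * A (2 * l)) =
        (B ^ (2 * η + 1) * A (2 * l)) ^ 3 * (B ^ (2 * ε) * A (2 * j + 1)) ^ (2 * t + 1) ↔
      2 * (l * (s + 1)) = (ε * t + η + j) * θ := by
  have hleft : B ^ (2 * ε) * A (2 * j + 1) * (B ^ (2 * η + 1) * A (2 * l)) =
      B ^ (2 * (ε + η) + 3) * A (2 * (s * j + t) + 1 + η * θ + 2 * l) := by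
    rw [mul_assoc, ← mul_assoc (A _), aPow_odd_mul_b_pow_odd P, mul_assoc, ← mul_assoc, ← pow_add,
      ← aPow_add]
    congr 2
    ring
  have hright :
      (B ^ (2 * η + 1) * A (2 * l)) ^ 3 * (B ^ (2 * ε) * A (2 * j + 1)) ^ (2 * t + 1) =
        B ^ (2 * (ε + η) + 3) *
          A (2 * (l * (s + 2) + t * (2 * j + 1 + ε * t * (s + 1)) + j) + 1) := by
    rw [show 3 = 2 * 1 + 1 from rfl, b_pow_odd_mul_aPow_pow_odd P, zpow_add_one,
      b_pow_even_mul_aPow_odd_zpow P, ← mul_assoc (A _), aPow_two_mul_mul_b_pow_even P, mul_assoc,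
      ← mul_assoc (A _), ← mul_assoc (A _), aPow_two_mul_mul_b_pow_even P, ← mul_assoc, ← mul_assoc,
      ← mul_assoc, ← pow_add, mul_assoc, mul_assoc, ← aPow_add, ← aPow_add]
    congr 2
    · ring
    · push_cast
      ring
  rw [hleft, hright, pow_mul_aPow_eq_iff P, and_iff_right (Nat.ModEq.refl _)]
  constructor <;> intro h
  · linear_combination -h + j * P.two_mul_mul - (j + t * ε) * P.four_mul
  · linear_combination -h + j * P.two_mul_mul - (j + t * ε) * P.four_mul

theorem HasImages.two_mul_eq (P : Admissible m t s) {φ : MulAut (ZSGroup m t s)} {ε η : ℕ}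
    {j l : ZMod m} (h : HasImages φ ε η j l) :
    2 * (l * (s + 1)) = (ε * t + η + j) * θ := by
  rw [← mul_eq_iff_images P, ← h.1, ← h.2, ← map_mul, satisfiesRels.mul_eq, map_mul, map_pow,
    map_zpow]

theorem HasImages.pow (P : Admissible m t s) {φ : MulAut (ZSGroup m t s)} {l : ZMod m}
    (h : HasImages φ 0 0 0 l) (k : ℕ) : HasImages (φ ^ k) 0 0 0 (l * k) := by
  induction k with
  | zero => simpa using HasImages.one
  | succ k ih =>
    rw [pow_succ]
    refine (ih.mul P h).congr rfl rfl ?_ ?_ <;> push_cast <;> ring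

theorem HasImages.commute (P : Admissible m t s) (hθ : θ = 0) {α φ : MulAut (ZSGroup m t s)}
    {ε ε' η η' : ℕ} {j l : ZMod m} (hα : HasImages α ε η 0 0) (hφ : HasImages φ ε' η' j l) :
    Commute α φ := by
  have hl := hφ.two_mul_eq P
  refine ((hα.mul P hφ).eq_iff P (hφ.mul P hα)).2
    ⟨by rw [add_comm], by rw [add_comm], ?_, ?_⟩
  · linear_combination ε * j * hθ - ε * hl - ε * (ε' * t + η' + j) * hθ
  · linear_combination ε * l * hθ - η * hl - η * (ε' * t + η' + j) * hθ

theorem satisfiesRels_images (P : Admissible m t s) {ε η : ℕ} {j l : ZMod m}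
    (hrel : 2 * (l * (s + 1)) = (ε * t + η + j) * θ) :
    SatisfiesRels m t s (B ^ (2 * ε) * A (2 * j + 1)) (B ^ (2 * η + 1) * A (2 * l)) where
  pow_m := by
    obtain ⟨k, hk⟩ := even_iff_exists_two_mul.1 P.even
    have hk0 : (2 * k : ZMod m) = 0 := by
      rw [← Nat.cast_ofNat, ← Nat.cast_mul, ← hk, ZMod.natCast_self]
    rw [← zpow_natCast, show (m : ℤ) = 2 * k by omega, b_pow_even_mul_aPow_odd_zpow P,
      Int.cast_natCast, ← mul_assoc, hk0, zero_mul, aPow_zero]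
  pow_four := by
    rw [show 4 = 2 * 2 from rfl, b_pow_odd_mul_aPow_pow_even P, satisfiesRels.pow_four, one_mul,
      ← aPow_zero]
    congr 1
    push_cast
    linear_combination 2 * hrel + (ε * t + η + j) * P.two_mul_twist
  mul_eq := (mul_eq_iff_images P ε η j l).2 hrel
  sq_mul_eq := by
    have hsq : (B ^ (2 * ε) * A (2 * j + 1)) ^ 2 = A (2 * (2 * j + 1 + ε * t * (s + 1))) := by
      simpa using b_pow_even_mul_aPow_odd_zpow P ε j 1
    rw [hsq, b_pow_even_mul_aPow_odd_zpow P, ← mul_assoc, aPow_two_mul_mul_b_pow_odd P,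
      mul_assoc (B ^ _), mul_assoc (B ^ _), ← aPow_add, ← aPow_add, add_comm (2 * l)]

theorem closure_images_eq_top (P : Admissible m t s) {ε η : ℕ} {j l : ZMod m}
    (hj : IsUnit (2 * j + 1)) :
    Subgroup.closure {B ^ (2 * ε) * A (2 * j + 1), B ^ (2 * η + 1) * A (2 * l)} = ⊤ := by
  set R := Subgroup.closure {B ^ (2 * ε) * A (2 * j + 1), B ^ (2 * η + 1) * A (2 * l)}
  have hX : B ^ (2 * ε) * A (2 * j + 1) ∈ R := Subgroup.subset_closure (.inl rfl)
  have hY : B ^ (2 * η + 1) * A (2 * l) ∈ R := Subgroup.subset_closure (.inr rfl)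
  have haPow (k : ZMod m) : A (2 * k) ∈ R := by
    obtain ⟨v, hv⟩ := hj.exists_right_inv
    obtain ⟨i, rfl⟩ := P.exists_odd_of_isUnit (.of_mul_eq_one_right _ hv)
    obtain ⟨z, hz⟩ := ZMod.intCast_surjective
      (k * ((2 * i + 1) * (1 + ε * (t * (s + 1)))) : ZMod m)
    have hmem := R.zpow_mem hX (2 * z)
    rw [b_pow_even_mul_aPow_odd_zpow P, hz] at hmem
    convert hmem using 2
    linear_combination -2 * k * (1 + ε * t * (s + 1)) * hv - k * ε * P.twist_mul_odd i -
      k * ε * P.two_mul_twist - k * ε ^ 2 * t * (2 * i + 1) * (P.mul_twist + P.two_mul_twist)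
  have hb : B ∈ R := by
    have hmem := R.pow_mem ((R.mul_mem_cancel_right (haPow l)).1 hY) (2 * η + 1)
    rwa [← pow_mul, b_pow_eq (show (2 * η + 1) * (2 * η + 1) ≡ 1 [MOD 4] by
      rw [Nat.ModEq]; ring_nf; omega), pow_one] at hmem
  have ha : a ∈ R := by
    have hmem := (R.mul_mem_cancel_left (R.pow_mem hb (2 * ε))).1 hX
    rwa [aPow_add, R.mul_mem_cancel_left (haPow j), aPow_one] at hmem
  rw [eq_top_iff, ← closure_a_b, Subgroup.closure_le]
  rintro x (rfl | rfl)
  exacts [ha, hb]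

theorem exists_hasImages [NeZero m] (P : Admissible m t s) {ε η : ℕ} {j l : ZMod m}
    (hj : IsUnit (2 * j + 1)) (hrel : 2 * (l * (s + 1)) = (ε * t + η + j) * θ) :
    ∃ φ : MulAut (ZSGroup m t s), HasImages φ ε η j l := by
  have := finite P
  let f := lift (satisfiesRels_images P hrel)
  have hf : Function.Surjective f := by
    rw [← MonoidHom.range_eq_top, eq_top_iff,
      ← closure_images_eq_top (ε := ε) (η := η) (l := l) P hj, Subgroup.closure_le]
    rintro x (rfl | rfl)
    exacts [⟨a, lift_a _⟩, ⟨b, lift_b _⟩]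
  exact ⟨MulEquiv.ofBijective f ⟨Finite.injective_iff_surjective.2 hf, hf⟩,
    lift_a (satisfiesRels_images P hrel), lift_b (satisfiesRels_images P hrel)⟩

variable {σ : (ZMod m)ˣ →* MulAut (ZSGroup m t s)} {τ ρ α β : MulAut (ZSGroup m t s)}

/-- The homomorphism `σ` sends the unit `2j+1` to the automorphism given by `a ↦ a ^ (2j+1)` and
`b ↦ b * a ^ (-2tj)`. -/
def IsUnitAction (σ : (ZMod m)ˣ →* MulAut (ZSGroup m t s)) : Prop :=
  ∀ (u : (ZMod m)ˣ) (j : ZMod m), (u : ZMod m) = 2 * j + 1 → HasImages (σ u) 0 0 j (-(t * j))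

theorem exists_isUnitAction [NeZero m] (P : Admissible m t s) :
    ∃ σ : (ZMod m)ˣ →* MulAut (ZSGroup m t s), IsUnitAction σ := by
  have hex (u : (ZMod m)ˣ) : ∃ φ : MulAut (ZSGroup m t s),
      ∀ j : ZMod m, (u : ZMod m) = 2 * j + 1 → HasImages φ 0 0 j (-(t * j)) := by
    obtain ⟨j, hj⟩ := P.exists_odd_of_isUnit u.isUnit
    obtain ⟨φ, hφ⟩ := exists_hasImages P (ε := 0) (η := 0) (j := j) (l := -(t * j))
      (hj ▸ u.isUnit) (by push_cast; linear_combination -j * P.two_mul_twist)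
    refine ⟨φ, fun i hi => hφ.congr rfl rfl ?_ ?_⟩
    · linear_combination hi - hj
    · linear_combination -t * (hi - hj)
  choose σ hσ using hex
  refine ⟨MonoidHom.mk' σ fun u v => ?_, hσ⟩
  obtain ⟨i, hi⟩ := P.exists_odd_of_isUnit u.isUnit
  obtain ⟨j, hj⟩ := P.exists_odd_of_isUnit v.isUnit
  have huv : ((u * v : (ZMod m)ˣ) : ZMod m) = 2 * (i + (2 * i + 1) * j) + 1 := by
    rw [Units.val_mul, hi, hj]
    ring
  rw [(hσ _ _ huv).eq_iff P ((hσ u i hi).mul P (hσ v j hj))]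
  refine ⟨rfl, rfl, ?_, ?_⟩ <;> push_cast <;> ring

theorem HasImages.pow_mul_unit (P : Admissible m t s) (hσ : IsUnitAction σ) {l : ZMod m}
    (hτ : HasImages τ 0 0 0 l) (k : ℕ) {u : (ZMod m)ˣ} {j : ZMod m}
    (hu : (u : ZMod m) = 2 * j + 1) : HasImages (τ ^ k * σ u) 0 0 j (l * k - t * j) := by
  refine ((hτ.pow P k).mul P (hσ u j hu)).congr rfl rfl ?_ ?_ <;> push_cast <;> ring

theorem normal_form_cases (P : Admissible m t s) (ht : Odd t) (hs : Odd s) (g : ZSGroup m t s) :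
    (∃ (η : ℕ) (l : ZMod m), g = B ^ (2 * η + 1) * A (2 * l)) ∨
      (∃ (ε : ℕ) (j : ZMod m), g = B ^ (2 * ε) * A (2 * j + 1)) ∨
      ∃ y : ZMod m, g ^ 2 = A (2 * (2 * y)) := by
  obtain ⟨i, x, rfl⟩ := exists_eq_pow_mul_aPow P g
  obtain ⟨k, rfl | rfl⟩ := exists_eq_two_mul_or x <;> obtain ⟨n, rfl | rfl⟩ := i.even_or_odd'
  · refine .inr (.inr ⟨k, ?_⟩)
    rw [b_pow_even_mul_aPow_sq P]
    congr 1
    linear_combination n * k * P.two_mul_twist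
  · exact .inl ⟨n, k, rfl⟩
  · exact .inr (.inl ⟨n, k, rfl⟩)
  · obtain ⟨e, he⟩ := ht
    obtain ⟨c, hc⟩ := hs
    refine .inr (.inr ⟨(c + 1) * k + e + 1 + n * (2 * e + 1) * (c + 1), ?_⟩)
    rw [pow_two, mul_assoc, ← mul_assoc (A _), aPow_odd_mul_b_pow_odd P, ← mul_assoc, ← mul_assoc,
      ← pow_add, mul_assoc, ← aPow_add,
      b_pow_eq (show 2 * n + 1 + (2 * n + 3) ≡ 0 [MOD 4] by rw [Nat.ModEq]; omega), pow_zero,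
      one_mul]
    congr 1
    rw [he, hc]
    push_cast
    ring

/-- The admissible parameters with `m = 8 * q`, where `q` and `t` are odd. -/
structure EightAdmissible (m q : ℕ) (t s : ℤ) : Prop extends Admissible m t s where
  eq_mul : m = 8 * q
  odd_q : Odd q
  odd_t : Odd t

namespace EightAdmissible

variable {q d r : ℕ}

theorem neZero (P : EightAdmissible m q t s) : NeZero m :=
  ⟨by have := P.eq_mul; have := P.odd_q.pos; omega⟩

theorem eight_mul_q (P : EightAdmissible m q t s) : (8 * q : ZMod m) = 0 := by
  have h : ((8 * q : ℕ) : ZMod m) = 0 := by rw [← P.eq_mul, ZMod.natCast_self]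
  exact_mod_cast h

theorem intCast_eq_zero_iff (P : EightAdmissible m q t s) (x : ℤ) :
    (x : ZMod m) = 0 ↔ 8 * (q : ℤ) ∣ x := by
  rw [ZMod.intCast_zmod_eq_zero_iff_dvd, P.eq_mul]
  push_cast
  rfl

theorem four_mul_q_ne_zero (P : EightAdmissible m q t s) : (4 * q : ZMod m) ≠ 0 := by
  intro h
  have hdvd := (P.intCast_eq_zero_iff (4 * q)).1 (by exact_mod_cast h)
  have := Int.le_of_dvd (by have := P.odd_q.pos; omega) hdvd
  have := P.odd_q.pos
  omega

theorem eq_zero_or_eq_of_two_mul_eq_zero (P : EightAdmissible m q t s) {x : ZMod m}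
    (hx : 2 * x = 0) : x = 0 ∨ x = 4 * q := by
  obtain ⟨x, rfl⟩ := ZMod.intCast_surjective x
  obtain ⟨c, hc⟩ := (P.intCast_eq_zero_iff (2 * x)).1 (by exact_mod_cast hx)
  obtain rfl : x = 4 * q * c := by linarith
  obtain ⟨e, rfl | rfl⟩ := c.even_or_odd' <;> push_cast
  · exact .inl (by linear_combination e * P.eight_mul_q)
  · exact .inr (by linear_combination e * P.eight_mul_q)

theorem four_mul_q_mul_odd (P : EightAdmissible m q t s) {k : ℤ} (hk : Odd k) :
    (4 * q * k : ZMod m) = 4 * q := by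
  obtain ⟨e, rfl⟩ := hk
  push_cast
  linear_combination e * P.eight_mul_q

theorem even_of_four_mul_q_mul_eq_zero (P : EightAdmissible m q t s) {k : ℤ}
    (h : (4 * q * k : ZMod m) = 0) : Even k := by
  by_contra hk
  exact P.four_mul_q_ne_zero (P.four_mul_q_mul_odd (Int.not_even_iff_odd.1 hk) ▸ h)

theorem odd_s (P : EightAdmissible m q t s) : Odd s := by
  obtain ⟨c, hc⟩ := (P.intCast_eq_zero_iff (2 * s ^ 2 - 2)).1 (by
    push_cast
    exact sub_eq_zero.2 P.two_mul_sq)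
  have hsq : Odd (s ^ 2) := ⟨2 * q * c, by linarith⟩
  exact (Int.odd_pow.1 hsq).resolve_right two_ne_zero

theorem isUnit_of_two_mul_mul_eq_two (P : EightAdmissible m q t s) {x y : ZMod m}
    (h : 2 * (x * y) = 2) : IsUnit x := by
  have hxy : x * y = 1 ∨ x * y = 1 + 4 * q := by
    rcases P.eq_zero_or_eq_of_two_mul_eq_zero (x := x * y - 1) (by linear_combination h) with h | h
    · exact .inl (by linear_combination h)
    · exact .inr (by linear_combination h)
  refine IsUnit.of_mul_eq_one (y * (x * y)) ?_
  rcases hxy with hxy | hxy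
  · linear_combination (1 + x * y) * hxy
  · linear_combination (1 + 4 * q + x * y) * hxy + (1 + 2 * q) * P.eight_mul_q

theorem exists_map_a_eq (P : EightAdmissible m q t s) (φ : MulAut (ZSGroup m t s)) :
    ∃ (ε : ℕ) (j : ZMod m), φ a = B ^ (2 * ε) * A (2 * j + 1) := by
  have hpow : φ a ^ (2 * (2 * q)) ≠ 1 := by
    rw [← map_pow, ← aPow_one, aPow_pow, ne_eq, EmbeddingLike.map_eq_one_iff]
    intro h
    have h0 : B ^ 0 * A ((2 * (2 * q) : ℕ) * 1) = B ^ 0 * A 0 := by rw [h, aPow_zero]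
    refine P.four_mul_q_ne_zero ?_
    have := ((pow_mul_aPow_eq_iff P.toAdmissible).1 h0).2
    push_cast at this
    linear_combination this
  rcases normal_form_cases P.toAdmissible P.odd_t P.odd_s (φ a) with ⟨η, l, h⟩ | h | ⟨y, h⟩
  · obtain ⟨c, hc⟩ := P.odd_s
    refine absurd ?_ hpow
    rw [h, b_pow_odd_mul_aPow_pow_even P.toAdmissible,
      b_pow_eq (show 2 * (2 * q) ≡ 0 [MOD 4] by rw [Nat.ModEq]; omega), pow_zero, one_mul,
      ← aPow_zero, hc]
    congr 1
    push_cast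
    linear_combination l * (c + 1) * P.eight_mul_q
  · exact h
  · refine absurd ?_ hpow
    rw [pow_mul, h, aPow_pow, ← aPow_zero]
    congr 1
    push_cast
    linear_combination y * P.eight_mul_q

theorem exists_hasImages_of_mulAut (P : EightAdmissible m q t s) (φ : MulAut (ZSGroup m t s)) :
    ∃ (ε η : ℕ) (j l : ZMod m), HasImages φ ε η j l := by
  have hsq (y : ZMod m) : φ b ^ 2 ≠ A (2 * y) := by
    intro h
    obtain ⟨ε, j, hinv⟩ := P.exists_map_a_eq φ⁻¹
    have hb := congrArg (φ⁻¹ : MulAut _) h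
    rw [map_aPow_two_mul P.toAdmissible hinv, map_pow, MulAut.inv_apply_self] at hb
    have hb' : B ^ 2 * A 0 = B ^ 0 * A (2 * (y * (2 * j + 1 + ε * t * (s + 1)))) := by
      rw [aPow_zero, mul_one, pow_zero, one_mul, hb]
    exact absurd ((pow_mul_aPow_eq_iff P.toAdmissible).1 hb').1 (by decide)
  obtain ⟨ε, j, ha⟩ := P.exists_map_a_eq φ
  rcases normal_form_cases P.toAdmissible P.odd_t P.odd_s (φ b) with ⟨η, l, h⟩ | ⟨n, k, h⟩ | ⟨y, h⟩
  · exact ⟨ε, η, j, l, ha, h⟩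
  · exact absurd (h ▸ b_pow_even_mul_aPow_odd_zpow P.toAdmissible n k 1) (hsq _)
  · exact absurd h (hsq _)

theorem isUnit_of_hasImages (P : EightAdmissible m q t s) {φ : MulAut (ZSGroup m t s)} {ε η : ℕ}
    {j l : ZMod m} (h : HasImages φ ε η j l) : IsUnit (2 * j + 1) := by
  obtain ⟨ε', j', h'⟩ := P.exists_map_a_eq φ⁻¹
  have hcomp := MulAut.inv_apply_self _ φ (A (2 * 1))
  rw [map_aPow_two_mul P.toAdmissible h.1, map_aPow_two_mul P.toAdmissible h',
    ← one_mul (A _), ← one_mul (A (2 * 1)), ← pow_zero B, pow_mul_aPow_eq_iff P.toAdmissible]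
    at hcomp
  refine P.isUnit_of_two_mul_mul_eq_two
    (y := (2 * j' + 1 + ε' * t * (s + 1)) * (1 - ε * t * (s + 1))) ?_
  linear_combination (1 - ε * t * (s + 1)) * hcomp.2 - ε * P.twist_mul_odd j' -
    ε * P.two_mul_twist + ε * t * (ε * (2 * j' + 1 + ε' * t * (s + 1)) - ε') *
      (P.mul_twist + P.two_mul_twist)

theorem odd_gcd (P : EightAdmissible m q t s) (hd : Int.gcd t m = d) : Odd d := by
  obtain ⟨e, he⟩ : (d : ℤ) ∣ t := hd ▸ Int.gcd_dvd_left ..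
  exact_mod_cast Int.Odd.of_mul_left (he ▸ P.odd_t)

theorem gcd_dvd (P : EightAdmissible m q t s) (hd : Int.gcd t m = d) : d ∣ q := by
  have hdm : d ∣ 8 * q := by
    rw [← P.eq_mul, ← hd]
    exact_mod_cast Int.gcd_dvd_right t m
  exact ((Nat.coprime_two_right.2 (P.odd_gcd hd)).pow_right 3).dvd_of_dvd_mul_left hdm

theorem two_mul_gcd_mul (P : EightAdmissible m q t s) (hd : Int.gcd t m = d) :
    (2 * d * (s + 1) : ZMod m) = θ := by
  obtain ⟨e, he⟩ : (d : ℤ) ∣ t := hd ▸ Int.gcd_dvd_left ..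
  have hodd : Odd e := Int.Odd.of_mul_right (he ▸ P.odd_t)
  have hbezout : (d : ZMod m) = t * Int.gcdA t m := by
    have h := congrArg (Int.cast : ℤ → ZMod m) (Int.gcd_eq_gcd_ab t m)
    rw [hd] at h
    push_cast at h
    simpa using h
  have hzero : 2 * (2 * d * (s + 1) : ZMod m) = 0 := by
    linear_combination 4 * (s + 1) * hbezout + Int.gcdA t m * P.four_mul
  have ht : (t : ZMod m) = d * e := by exact_mod_cast congrArg (Int.cast : ℤ → ZMod m) he
  rw [ht]
  rcases P.eq_zero_or_eq_of_two_mul_eq_zero hzero with h | h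
  · linear_combination (1 - e) * h
  · linear_combination (1 - e) * h - P.four_mul_q_mul_odd hodd

theorem exists_eq_gcd_mul (P : EightAdmissible m q t s) (hd : Int.gcd t m = d) {l : ZMod m}
    (hl : 2 * (l * (s + 1)) = 0) : ∃ k : ℕ, l = d * k := by
  have := P.neZero
  obtain ⟨e, he⟩ : (d : ℤ) ∣ t := hd ▸ Int.gcd_dvd_left ..
  obtain ⟨l, rfl⟩ := ZMod.intCast_surjective l
  have hdm : (d : ℤ) ∣ 8 * q := (Int.natCast_dvd_natCast.2 (P.gcd_dvd hd)).mul_left 8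
  have h2 : IsCoprime (d : ℤ) 2 := Int.isCoprime_two_right.2 (by exact_mod_cast P.odd_gcd hd)
  have h4 : IsCoprime (d : ℤ) 4 := h2.pow_right (n := 2)
  have hs1 : (d : ℤ) ∣ s - 1 := by
    have h := hdm.trans ((P.intCast_eq_zero_iff (2 * (t + 1) * (s - 1))).1 (by
      push_cast
      exact P.two_mul_mul))
    have hcop : IsCoprime (d : ℤ) (2 * (t + 1)) := h2.mul_right ⟨-e, 1, by rw [he]; ring⟩
    exact hcop.dvd_of_dvd_mul_left h
  have hl' := hdm.trans ((P.intCast_eq_zero_iff (2 * (l * (s + 1)))).1 (by exact_mod_cast hl))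
  have h4l : (d : ℤ) ∣ 4 * l := by
    have := hl'.sub (hs1.mul_left (2 * l))
    rwa [show 2 * (l * (s + 1)) - 2 * l * (s - 1) = 4 * l by ring] at this
  obtain ⟨k, rfl⟩ := h4.dvd_of_dvd_mul_left h4l
  obtain ⟨n, hn⟩ := ZMod.natCast_zmod_surjective (k : ZMod m)
  exact ⟨n, by rw [hn]; push_cast; rfl⟩

theorem eq_top_of_hasImages_mem (P : EightAdmissible m q t s)
    {σ : (ZMod m)ˣ →* MulAut (ZSGroup m t s)} (hσ : IsUnitAction σ)
    {α β : MulAut (ZSGroup m t s)} {x y : ZMod m} (hα : HasImages α 1 0 0 x)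
    (hβ : HasImages β 0 1 0 y) {R : Subgroup (MulAut (ZSGroup m t s))} (hσR : ∀ u, σ u ∈ R)
    (hαR : α ∈ R) (hβR : β ∈ R)
    (hR : ∀ (φ : MulAut (ZSGroup m t s)) (l : ZMod m), HasImages φ 0 0 0 l → φ ∈ R) : R = ⊤ := by
  have mem_zero_zero {φ : MulAut (ZSGroup m t s)} {j l : ZMod m} (h : HasImages φ 0 0 j l) :
      φ ∈ R := by
    obtain ⟨u, hu⟩ := P.isUnit_of_hasImages h
    obtain ⟨i, hi⟩ := P.exists_odd_of_isUnit u⁻¹.isUnit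
    have huv : (2 * j + 1) * (2 * i + 1) = 1 := by rw [← hu, ← hi, Units.mul_inv]
    refine (R.mul_mem_cancel_right (hσR u⁻¹)).1 (hR _ (l + (2 * j + 1) * -(t * i)) ?_)
    refine (h.mul P.toAdmissible (hσ _ i hi)).congr rfl rfl ?_ ?_ <;> push_cast
    · linear_combination huv
    · ring
  have mem_zero {φ : MulAut (ZSGroup m t s)} {η : ℕ} {j l : ZMod m} (h : HasImages φ 0 η j l) :
      φ ∈ R := by
    obtain ⟨n, rfl | rfl⟩ := η.even_or_odd'
    · exact mem_zero_zero (h.congr rfl (by rw [Nat.ModEq]; omega) rfl rfl)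
    · exact (R.mul_mem_cancel_left hβR).1 (mem_zero_zero
        ((hβ.mul P.toAdmissible h).congr rfl (by rw [Nat.ModEq]; omega) rfl rfl))
  refine eq_top_iff.2 fun φ _ => ?_
  obtain ⟨ε, η, j, l, h⟩ := P.exists_hasImages_of_mulAut φ
  obtain ⟨n, rfl | rfl⟩ := ε.even_or_odd'
  · exact mem_zero (h.congr (by rw [Nat.ModEq]; omega) rfl rfl rfl)
  · exact (R.mul_mem_cancel_left hαR).1 (mem_zero
      ((hα.mul P.toAdmissible h).congr (by rw [Nat.ModEq]; omega) rfl rfl rfl))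

theorem four_mul_r_dvd (P : EightAdmissible m q t s) (hr : q = d * r) {k : ℕ}
    (h : (2 * (d * k) : ZMod m) = 0) : 4 * r ∣ k := by
  have hdvd := (P.intCast_eq_zero_iff (2 * (d * k))).1 (by exact_mod_cast h)
  have hd : 0 < 2 * d := by
    have := P.odd_q.pos
    rw [hr] at this
    exact mul_pos two_pos (Nat.pos_of_mul_pos_right this)
  refine Nat.dvd_of_mul_dvd_mul_left hd ?_
  rw [show 2 * d * (4 * r) = 8 * q by rw [hr]; ring, mul_assoc]
  exact_mod_cast hdvd

/-! ### Vanishing twist -/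

theorem neZero_four_mul (P : EightAdmissible m q t s) (hr : q = d * r) : NeZero (4 * r) := by
  have hq := P.odd_q.pos
  rw [hr] at hq
  exact ⟨(mul_pos four_pos (Nat.pos_of_mul_pos_left hq)).ne'⟩

theorem natCast_q_eq (hr : q = d * r) : (q : ZMod m) = d * r := by
  rw [hr, Nat.cast_mul]

theorem isSemidirectFrame_of_twist_eq_zero (P : EightAdmissible m q t s) (hr : q = d * r)
    (hθ : θ = 0) (hσ : IsUnitAction σ) (hτ : HasImages τ 0 0 0 d) (hα : HasImages α 1 0 0 0) :
    IsSemidirectFrame (4 * r) τ α σ where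
  pow_eq_one := by
    refine ((hτ.pow P.toAdmissible _).eq_iff P.toAdmissible .one).2 ⟨rfl, rfl, rfl, ?_⟩
    push_cast
    linear_combination P.eight_mul_q - 8 * natCast_q_eq (m := m) hr
  sq_eq_one := by
    rw [pow_two, (hα.mul P.toAdmissible hα).eq_iff P.toAdmissible .one]
    simp [Nat.ModEq]
  commute u := by
    obtain ⟨j, hj⟩ := P.exists_odd_of_isUnit u.isUnit
    exact hα.commute P.toAdmissible hθ (hσ u j hj)
  semiconjBy_involution := ⟨1, (pow_one τ).symm ▸ hα.commute P.toAdmissible hθ hτ⟩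
  semiconjBy u := by
    have := P.neZero
    obtain ⟨j, hj⟩ := P.exists_odd_of_isUnit u.isUnit
    obtain ⟨n, rfl⟩ := ZMod.natCast_zmod_surjective j
    refine ⟨2 * n + 1, (((hσ u n hj).mul P.toAdmissible hτ).eq_iff P.toAdmissible
      (hτ.pow_mul_unit P.toAdmissible hσ _ hj)).2 ⟨rfl, rfl, ?_, ?_⟩⟩ <;> push_cast <;> ring
  dvd_and_eq_one k u h := by
    obtain ⟨j, hj⟩ := P.exists_odd_of_isUnit u.isUnit
    obtain ⟨-, -, hj0, hl0⟩ :=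
      ((hτ.pow_mul_unit P.toAdmissible hσ k hj).eq_iff P.toAdmissible .one).1 h
    refine ⟨P.four_mul_r_dvd hr ?_, Units.ext ?_⟩
    · linear_combination hl0 + t * hj0
    · rw [hj, hj0, mul_zero, zero_add, Units.val_one]
  ne_one k u h := by
    obtain ⟨j, hj⟩ := P.exists_odd_of_isUnit u.isUnit
    exact absurd ((((hτ.pow P.toAdmissible k).mul P.toAdmissible (hα.mul P.toAdmissible
      (hσ u j hj))).eq_iff P.toAdmissible .one).1 h).1 (by decide)

theorem exists_eq_pow_of_hasImages (P : EightAdmissible m q t s) (hd : Int.gcd t m = d)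
    (hτ : HasImages τ 0 0 0 d) {φ : MulAut (ZSGroup m t s)} {l : ZMod m}
    (h : HasImages φ 0 0 0 l) : ∃ k : ℕ, φ = τ ^ k := by
  obtain ⟨k, rfl⟩ := P.exists_eq_gcd_mul hd (by simpa using h.two_mul_eq P.toAdmissible)
  exact ⟨k, (h.eq_iff P.toAdmissible (hτ.pow P.toAdmissible k)).2 ⟨rfl, rfl, rfl, rfl⟩⟩

theorem not_eq_pow_mul_or_of_hasImages (P : EightAdmissible m q t s) (hσ : IsUnitAction σ)
    {l x y : ZMod m} (hτ : HasImages τ 0 0 0 l) (hα : HasImages α 1 0 0 x)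
    (hβ : HasImages β 0 1 0 y) (k : ℕ) (u : (ZMod m)ˣ) :
    ¬ (β = τ ^ k * σ u ∨ β = τ ^ k * (α * σ u)) := by
  have P' := P.toAdmissible
  obtain ⟨j, hj⟩ := P.exists_odd_of_isUnit u.isUnit
  rintro (h | h)
  · exact absurd ((hβ.eq_iff P' (hτ.pow_mul_unit P' hσ k hj)).1 h).2.1 (by decide)
  · exact absurd ((hβ.eq_iff P' ((hτ.pow P' k).mul P' (hα.mul P' (hσ u j hj)))).1 h).2.1
      (by decide)

theorem exists_mulEquiv_of_twist_eq_zero (P : EightAdmissible m q t s) (hd : Int.gcd t m = d)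
    (hr : q = d * r) (hθ : θ = 0) :
    ∃ (φ : Zc 2 × (ZMod m)ˣ →* MulAut (Zc (4 * r)))
      (ψ : Zc 2 →* MulAut (Zc (4 * r) ⋊[φ] (Zc 2 × (ZMod m)ˣ))),
      Nonempty (MulAut (ZSGroup m t s) ≃* (Zc (4 * r) ⋊[φ] (Zc 2 × (ZMod m)ˣ)) ⋊[ψ] Zc 2) := by
  have := P.neZero
  have := P.neZero_four_mul hr
  have P' := P.toAdmissible
  obtain ⟨σ, hσ⟩ := exists_isUnitAction P'
  obtain ⟨τ, hτ⟩ := exists_hasImages P' (ε := 0) (η := 0) (j := 0) (l := d) (by simp)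
    (by push_cast; linear_combination P.two_mul_gcd_mul hd + hθ)
  obtain ⟨α, hα⟩ := exists_hasImages P' (ε := 1) (η := 0) (j := 0) (l := 0) (by simp)
    (by push_cast; linear_combination -t * hθ)
  obtain ⟨β, hβ⟩ := exists_hasImages P' (ε := 0) (η := 1) (j := 0) (l := 0) (by simp)
    (by push_cast; linear_combination -hθ)
  obtain ⟨φ, e, he, hrange⟩ :=
    (P.isSemidirectFrame_of_twist_eq_zero hr hθ hσ hτ hα).exists_injective
  have hβ2 : β ^ 2 = 1 := by
    rw [pow_two, (hβ.mul P' hβ).eq_iff P' .one]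
    simp [Nat.ModEq]
  have hβe : β ∉ e.range := by
    rw [hrange]
    rintro ⟨k, u, hku⟩
    exact P.not_eq_pow_mul_or_of_hasImages hσ hτ hα hβ k u hku
  have hcomm (x) : Commute β (e x) := by
    obtain ⟨ε, η, j, l, h⟩ := P.exists_hasImages_of_mulAut (e x)
    exact hβ.commute P' hθ h
  obtain ⟨ψ, f, hf, hef, hβf⟩ := exists_semidirectProduct_zc_two_injective he hβ2
    (fun x => ⟨x, by rw [(hcomm x).eq, mul_inv_cancel_right]⟩) hβe
  have htop : f.range = ⊤ := P.eq_top_of_hasImages_mem hσ hα hβ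
    (fun u => hef ((hrange _).2 ⟨0, u, .inl (by simp)⟩))
    (hef ((hrange _).2 ⟨0, 1, .inr (by simp)⟩)) hβf fun χ l h => by
      obtain ⟨k, rfl⟩ := P.exists_eq_pow_of_hasImages hd hτ h
      exact hef ((hrange _).2 ⟨k, 1, .inl (by simp)⟩)
  exact ⟨φ, ψ, ⟨(MulEquiv.ofBijective f ⟨hf, MonoidHom.range_eq_top.1 htop⟩).symm⟩⟩

/-! ### Twist of order two -/

theorem four_mul_q_mul_r (P : EightAdmissible m q t s) (hr : q = d * r) :
    (4 * q * r : ZMod m) = 4 * q := by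
  exact_mod_cast P.four_mul_q_mul_odd (k := r)
    (by exact_mod_cast Nat.Odd.of_mul_right (hr ▸ P.odd_q))

theorem two_mul_q_mul (P : EightAdmissible m q t s) (hd : Int.gcd t m = d) (hr : q = d * r)
    (hθ : θ = 4 * q) : (2 * q * (s + 1) : ZMod m) = 4 * q := by
  linear_combination 2 * (s + 1) * natCast_q_eq (m := m) hr + r * P.two_mul_gcd_mul hd + r * hθ +
    P.four_mul_q_mul_r hr

theorem four_mul_q_mul_gcd (P : EightAdmissible m q t s) (hd : Int.gcd t m = d) :
    (4 * q * d : ZMod m) = 4 * q := by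
  exact_mod_cast P.four_mul_q_mul_odd (k := d) (by exact_mod_cast P.odd_gcd hd)

theorem hasImages_pow_two_mul (P : EightAdmissible m q t s) (hd : Int.gcd t m = d)
    (hθ : θ = 4 * q) (hτ : HasImages τ 1 0 0 d) (k : ℕ) :
    HasImages (τ ^ (2 * k)) 0 0 (2 * q * k) (2 * k * (d + q)) := by
  have hsq : HasImages (τ ^ 2) 0 0 (2 * q : ZMod m) (2 * (d + q) : ZMod m) := by
    rw [pow_two]
    refine (hτ.mul P.toAdmissible hτ).congr rfl rfl ?_ ?_ <;> push_cast
    · linear_combination P.two_mul_gcd_mul hd + hθ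
    · linear_combination d * hθ + P.four_mul_q_mul_gcd hd
  rw [pow_mul]
  induction k with
  | zero => simpa using HasImages.one
  | succ k ih =>
    rw [pow_succ]
    refine (ih.mul P.toAdmissible hsq).congr rfl rfl ?_ ?_ <;> push_cast
    · linear_combination 2 * q * k * P.eight_mul_q
    · linear_combination 2 * k * (d + q) * P.eight_mul_q

theorem hasImages_pow_two_mul_add_one (P : EightAdmissible m q t s) (hd : Int.gcd t m = d)
    (hθ : θ = 4 * q) (hτ : HasImages τ 1 0 0 d) (k : ℕ) :
    HasImages (τ ^ (2 * k + 1)) 1 0 (2 * q * k) (2 * k * (d + q) + d) := by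
  rw [pow_succ']
  refine (hτ.mul P.toAdmissible (P.hasImages_pow_two_mul hd hθ hτ k)).congr rfl rfl ?_ ?_ <;>
    push_cast
  · linear_combination q * k * P.two_mul_twist
  · linear_combination k * (d + q) * P.two_mul_twist

theorem hasImages_pow_two_mul_mul_unit (P : EightAdmissible m q t s) (hd : Int.gcd t m = d)
    (hθ : θ = 4 * q) (hσ : IsUnitAction σ) (hτ : HasImages τ 1 0 0 d) (k : ℕ) {u : (ZMod m)ˣ}
    {j : ZMod m} (hu : (u : ZMod m) = 2 * j + 1) :
    HasImages (τ ^ (2 * k) * σ u) 0 0 (2 * q * k + j) (2 * k * (d + q) - t * j) := by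
  refine ((P.hasImages_pow_two_mul hd hθ hτ k).mul P.toAdmissible (hσ u j hu)).congr rfl rfl ?_ ?_
    <;> push_cast
  · linear_combination k * j * P.eight_mul_q
  · linear_combination -k * j * t * P.eight_mul_q

theorem semiconjBy_involution_of_twist_eq (P : EightAdmissible m q t s) (hd : Int.gcd t m = d)
    (hr : q = d * r) (hθ : θ = 4 * q) (hτ : HasImages τ 1 0 0 d) (hρ : HasImages ρ 0 1 0 q) :
    SemiconjBy ρ τ (τ ^ (2 * r + 1)) := by
  have hq : (4 * q * q : ZMod m) = 4 * q := by
    exact_mod_cast P.four_mul_q_mul_odd (k := q) (by exact_mod_cast P.odd_q)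
  refine ((hρ.mul P.toAdmissible hτ).eq_iff P.toAdmissible
    ((P.hasImages_pow_two_mul_add_one hd hθ hτ r).mul P.toAdmissible hρ)).2
    ⟨rfl, rfl, ?_, ?_⟩ <;> push_cast
  · linear_combination P.two_mul_q_mul hd hr hθ - P.four_mul_q_mul_r hr
  · linear_combination 4 * (s + 2) * natCast_q_eq (m := m) hr - (s + 2) * P.four_mul_q_mul_r hr -
      P.two_mul_gcd_mul hd - (1 + q) * hθ - hq - (s + 3 + q * r) * P.eight_mul_q

theorem semiconjBy_unit_of_twist_eq (P : EightAdmissible m q t s) (hd : Int.gcd t m = d)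
    (hr : q = d * r) (hθ : θ = 4 * q) (hσ : IsUnitAction σ) (hτ : HasImages τ 1 0 0 d)
    {u : (ZMod m)ˣ} {i : ℕ} (hu : (u : ZMod m) = 2 * i + 1) :
    SemiconjBy (σ u) τ (τ ^ (2 * (i * (1 + r)) + 1)) := by
  refine (((hσ u i hu).mul P.toAdmissible hτ).eq_iff P.toAdmissible
    ((P.hasImages_pow_two_mul_add_one hd hθ hτ _).mul P.toAdmissible (hσ u i hu))).2
    ⟨rfl, rfl, ?_, ?_⟩ <;> push_cast
  · linear_combination -i * P.two_mul_twist - i * P.four_mul_q_mul_r hr -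
      i * (1 + i * (1 + r)) * P.eight_mul_q
  · linear_combination 4 * i * natCast_q_eq (m := m) hr - i * P.four_mul_q_mul_r hr + t * i * hθ +
      i * P.four_mul_q_mul_odd P.odd_t + i * (i * (1 + r) * t - 1) * P.eight_mul_q

theorem dvd_and_eq_one_of_twist_eq (P : EightAdmissible m q t s) (hd : Int.gcd t m = d)
    (hr : q = d * r) (hθ : θ = 4 * q) (hσ : IsUnitAction σ) (hτ : HasImages τ 1 0 0 d) {k : ℕ}
    {u : (ZMod m)ˣ} (h : τ ^ k * σ u = 1) : 4 * r ∣ k ∧ u = 1 := by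
  obtain ⟨j, hj⟩ := P.exists_odd_of_isUnit u.isUnit
  obtain ⟨n, rfl | rfl⟩ := k.even_or_odd'
  · obtain ⟨-, -, hj0, hl0⟩ := ((P.hasImages_pow_two_mul_mul_unit hd hθ hσ hτ n hj).eq_iff
      P.toAdmissible .one).1 h
    have hdvd : 4 * r ∣ 2 * n := by
      refine P.four_mul_r_dvd hr ?_
      push_cast
      linear_combination hl0 + t * hj0 - n * P.eight_mul_q - n * P.four_mul_q_mul_odd P.odd_t
    refine ⟨hdvd, Units.ext ?_⟩
    obtain ⟨c, hc⟩ := hdvd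
    have hn : (2 * n : ZMod m) = 4 * r * c := by exact_mod_cast congrArg (Nat.cast : ℕ → ZMod m) hc
    rw [hj, Units.val_one]
    linear_combination hj0 - 2 * q * hn - r * c * P.eight_mul_q
  · exact absurd ((((P.hasImages_pow_two_mul_add_one hd hθ hτ n).mul P.toAdmissible
      (hσ u j hj)).eq_iff P.toAdmissible .one).1 h).1 (by decide)

theorem isSemidirectFrame_of_twist_eq (P : EightAdmissible m q t s) (hd : Int.gcd t m = d)
    (hr : q = d * r) (hθ : θ = 4 * q) (hσ : IsUnitAction σ) (hτ : HasImages τ 1 0 0 d)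
    (hρ : HasImages ρ 0 1 0 q) :
    IsSemidirectFrame (4 * r) τ ρ σ where
  pow_eq_one := by
    rw [show 4 * r = 2 * (2 * r) by ring,
      (P.hasImages_pow_two_mul hd hθ hτ _).eq_iff P.toAdmissible .one]
    refine ⟨rfl, rfl, ?_, ?_⟩ <;> push_cast
    · linear_combination r * P.eight_mul_q
    · linear_combination (1 + r) * P.eight_mul_q - 8 * natCast_q_eq (m := m) hr
  sq_eq_one := by
    rw [pow_two, (hρ.mul P.toAdmissible hρ).eq_iff P.toAdmissible .one]
    refine ⟨rfl, rfl, ?_, ?_⟩ <;> push_cast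
    · ring
    · linear_combination P.two_mul_q_mul hd hr hθ + P.eight_mul_q
  commute u := by
    obtain ⟨j, hj⟩ := P.exists_odd_of_isUnit u.isUnit
    refine ((hρ.mul P.toAdmissible (hσ u j hj)).eq_iff P.toAdmissible
      ((hσ u j hj).mul P.toAdmissible hρ)).2 ⟨rfl, rfl, ?_, ?_⟩ <;> push_cast
    · ring
    · linear_combination j * hθ
  semiconjBy_involution := ⟨_, P.semiconjBy_involution_of_twist_eq hd hr hθ hτ hρ⟩
  semiconjBy u := by
    have := P.neZero
    obtain ⟨j, hj⟩ := P.exists_odd_of_isUnit u.isUnit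
    obtain ⟨i, rfl⟩ := ZMod.natCast_zmod_surjective j
    exact ⟨_, P.semiconjBy_unit_of_twist_eq hd hr hθ hσ hτ hj⟩
  dvd_and_eq_one _ _ h := P.dvd_and_eq_one_of_twist_eq hd hr hθ hσ hτ h
  ne_one k u h := by
    obtain ⟨j, hj⟩ := P.exists_odd_of_isUnit u.isUnit
    have hρσ := hρ.mul P.toAdmissible (hσ u j hj)
    obtain ⟨n, rfl | rfl⟩ := k.even_or_odd'
    · exact absurd ((((P.hasImages_pow_two_mul hd hθ hτ n).mul P.toAdmissible hρσ).eq_iff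
        P.toAdmissible .one).1 h).2.1 (by decide)
    · exact absurd ((((P.hasImages_pow_two_mul_add_one hd hθ hτ n).mul P.toAdmissible hρσ).eq_iff
        P.toAdmissible .one).1 h).2.1 (by decide)

theorem exists_eq_pow_mul_unit_of_hasImages (P : EightAdmissible m q t s) (hd : Int.gcd t m = d)
    (hθ : θ = 4 * q) (hσ : IsUnitAction σ) (hτ : HasImages τ 1 0 0 d)
    {φ : MulAut (ZSGroup m t s)} {l : ZMod m} (h : HasImages φ 0 0 0 l) :
    ∃ (k : ℕ) (u : (ZMod m)ˣ), φ = τ ^ (2 * k) * σ u := by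
  have hl := h.two_mul_eq P.toAdmissible
  obtain ⟨n, rfl⟩ := P.exists_eq_gcd_mul hd (by simpa using hl)
  have hn : (4 * q * (n : ℤ) : ZMod m) = 0 := by
    push_cast at hl ⊢
    linear_combination t * hl - d * n * hθ - n * P.four_mul_q_mul_gcd hd
  obtain ⟨k, hk⟩ := even_iff_exists_two_mul.1 (P.even_of_four_mul_q_mul_eq_zero hn)
  lift k to ℕ using by omega
  obtain rfl : n = 2 * k := by exact_mod_cast hk
  obtain ⟨u, hu⟩ := P.isUnit_of_hasImages (P.hasImages_pow_two_mul hd hθ hτ k)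
  refine ⟨k, u, (h.eq_iff P.toAdmissible
    (P.hasImages_pow_two_mul_mul_unit hd hθ hσ hτ k hu)).2 ⟨rfl, rfl, ?_, ?_⟩⟩ <;> push_cast
  · linear_combination -k * P.eight_mul_q
  · linear_combination k * P.four_mul_q_mul_odd P.odd_t

theorem exists_mulEquiv_of_twist_eq (P : EightAdmissible m q t s) (hd : Int.gcd t m = d)
    (hr : q = d * r) (hθ : θ = 4 * q) :
    ∃ φ : Zc 2 × (ZMod m)ˣ →* MulAut (Zc (4 * r)),
      Nonempty (MulAut (ZSGroup m t s) ≃* Zc (4 * r) ⋊[φ] (Zc 2 × (ZMod m)ˣ)) := by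
  have := P.neZero
  have := P.neZero_four_mul hr
  obtain ⟨σ, hσ⟩ := exists_isUnitAction P.toAdmissible
  obtain ⟨τ, hτ⟩ := exists_hasImages P.toAdmissible (ε := 1) (η := 0) (j := 0) (l := d) (by simp)
    (by
      push_cast
      linear_combination P.two_mul_gcd_mul hd + (1 - t) * hθ - P.four_mul_q_mul_odd P.odd_t)
  obtain ⟨ρ, hρ⟩ := exists_hasImages P.toAdmissible (ε := 0) (η := 1) (j := 0) (l := q) (by simp)
    (by push_cast; linear_combination P.two_mul_q_mul hd hr hθ - hθ)
  obtain ⟨φ, e, he, hrange⟩ :=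
    (P.isSemidirectFrame_of_twist_eq hd hr hθ hσ hτ hρ).exists_injective
  have htop : e.range = ⊤ := P.eq_top_of_hasImages_mem hσ hτ hρ
    (fun u => (hrange _).2 ⟨0, u, .inl (by simp)⟩) ((hrange _).2 ⟨1, 1, .inl (by simp)⟩)
    ((hrange _).2 ⟨0, 1, .inr (by simp)⟩) fun χ l h => by
      obtain ⟨k, u, rfl⟩ := P.exists_eq_pow_mul_unit_of_hasImages hd hθ hσ hτ h
      exact (hrange _).2 ⟨2 * k, u, .inl rfl⟩
  exact ⟨φ, ⟨(MulEquiv.ofBijective e ⟨he, MonoidHom.range_eq_top.1 htop⟩).symm⟩⟩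

end EightAdmissible

end ZSGroup

/-- Let `G = G(m,t,s)` with `m = 8q`, `q > 1` odd, `t` odd, and
`gcd(t,m) = d`.  If `2t(s+1) ≡ 0 (mod m)` then `Aut(G) ≅ (ℤ_{m/2d} ⋊ (ℤ₂ × U(m))) ⋊ ℤ₂`;
otherwise `Aut(G) ≅ ℤ_{m/2d} ⋊ (ℤ₂ × U(m))`. -/
theorem zs4m_aut_eight_q (m q d : ℕ) (t s : ℤ) (hq1 : 1 < q) (hqodd : Odd q)
    (hm : m = 8 * q) (htodd : Odd t)
    (hs0 : 0 ≤ s) (hsm : s < m)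
    (hG1 : 2 * s ^ 2 ≡ 2 [ZMOD (m : ℤ)])
    (hG2 : 4 * t * (s + 1) ≡ 0 [ZMOD (m : ℤ)])
    (hG3 : 2 * (t + 1) * (s - 1) ≡ 0 [ZMOD (m : ℤ)])
    (hG4 : Int.gcd s ((m : ℤ) / 2) = 1)
    (htm : Int.gcd t (m : ℤ) = d) :
    ((2 * t * (s + 1) ≡ 0 [ZMOD (m : ℤ)]) →
      ∃ (φ : Zc 2 × (ZMod m)ˣ →* MulAut (Zc (m / (2 * d))))
        (ψ : Zc 2 →* MulAut (Zc (m / (2 * d)) ⋊[φ] (Zc 2 × (ZMod m)ˣ))),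
        Nonempty (MulAut (ZSGroup m t s) ≃*
          (Zc (m / (2 * d)) ⋊[φ] (Zc 2 × (ZMod m)ˣ)) ⋊[ψ] Zc 2)) ∧
    (¬ (2 * t * (s + 1) ≡ 0 [ZMOD (m : ℤ)]) →
      ∃ (φ : Zc 2 × (ZMod m)ˣ →* MulAut (Zc (m / (2 * d)))),
        Nonempty (MulAut (ZSGroup m t s) ≃*
          Zc (m / (2 * d)) ⋊[φ] (Zc 2 × (ZMod m)ˣ))) := by
  have P : ZSGroup.EightAdmissible m q t s :=
    { even := ⟨4 * q, by omega⟩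
      two_mul_sq := by exact_mod_cast (ZMod.intCast_eq_intCast_iff _ _ m).2 hG1
      four_mul := by exact_mod_cast (ZMod.intCast_eq_intCast_iff _ _ m).2 hG2
      two_mul_mul := by exact_mod_cast (ZMod.intCast_eq_intCast_iff _ _ m).2 hG3
      eq_mul := hm
      odd_q := hqodd
      odd_t := htodd }
  obtain ⟨r, hr⟩ := P.gcd_dvd htm
  have hn : m / (2 * d) = 4 * r := by
    rw [hm, hr, show 8 * (d * r) = 4 * r * (2 * d) by ring]
    exact Nat.mul_div_cancel _ (mul_pos two_pos (P.odd_gcd htm).pos)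
  have htwist : 2 * t * (s + 1) ≡ 0 [ZMOD m] ↔ (2 * t * (s + 1) : ZMod m) = 0 := by
    rw [← ZMod.intCast_eq_intCast_iff]
    push_cast
    rfl
  rw [hn, htwist]
  exact ⟨P.exists_mulEquiv_of_twist_eq_zero htm hr, fun h => P.exists_mulEquiv_of_twist_eq htm hr
    ((P.eq_zero_or_eq_of_two_mul_eq_zero P.two_mul_twist).resolve_left h)⟩
end
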